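/- The integral from 0 to e^{−2π/√10} of E(q)^8 E(q^{10})^3 / E(q^2)^7 dq equals 1 − 2·√((10 − 4√5)/5). -/

import Mathlib

open Real

/-- Euler's product `E(q) = ∏_{j=1}^∞ (1 - q^j)`. -/
noncomputable def eulerE (q : ℝ) : ℝ := ∏' j : ℕ, (1 - q ^ (j + 1))

open Filter Topology

lemma aux_summable {q : ℝ} (h0 : 0 ≤ q) (h1 : q < 1) (c : ℝ) (a : ℕ) {m : ℕ} (hm : 0 < m) :
    Summable (fun j : ℕ => ‖c * q ^ (a + m * j)‖) := by
  have : Summable (fun j : ℕ => ‖c * q ^ a‖ * (q ^ m) ^ j) :=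
    (summable_geometric_of_lt_one (by positivity) (pow_lt_one₀ h0 h1 hm.ne')).mul_left _
  refine this.congr fun j => ?_
  rw [pow_add, pow_mul, ← mul_assoc, norm_mul (c * q ^ a), Real.norm_of_nonneg (by positivity : 0 ≤ (q ^ m) ^ j)]

lemma aux_mult {q : ℝ} (h0 : 0 ≤ q) (h1 : q < 1) (c : ℝ) (a : ℕ) {m : ℕ} (hm : 0 < m) :
    Multipliable (fun j : ℕ => 1 + c * q ^ (a + m * j)) :=
  multipliable_one_add_of_summable (aux_summable h0 h1 c a hm)

/-- progressions product -/
noncomputable def pp (q : ℝ) (a m : ℕ) : ℝ := ∏' j : ℕ, (1 - q ^ (a + m * j))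

/-- progressions product with plus signs -/
noncomputable def pq (q : ℝ) (a m : ℕ) : ℝ := ∏' j : ℕ, (1 + q ^ (a + m * j))

lemma pp_mult {q : ℝ} (h0 : 0 ≤ q) (h1 : q < 1) (a : ℕ) {m : ℕ} (hm : 0 < m) :
    Multipliable (fun j : ℕ => 1 - q ^ (a + m * j)) := by
  simpa [sub_eq_add_neg] using aux_mult h0 h1 (-1) a hm

lemma pq_mult {q : ℝ} (h0 : 0 ≤ q) (h1 : q < 1) (a : ℕ) {m : ℕ} (hm : 0 < m) :
    Multipliable (fun j : ℕ => 1 + q ^ (a + m * j)) := by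
  simpa using aux_mult h0 h1 1 a hm

lemma pp_pos {q : ℝ} (h0 : 0 ≤ q) (h1 : q < 1) {a m : ℕ} (ha : 0 < a) (hm : 0 < m) :
    0 < pp q a m := by
  have hne : pp q a m ≠ 0 := by
    have := tprod_one_add_ne_zero_of_summable (f := fun j : ℕ => (-1) * q ^ (a + m * j)) ?_
      (aux_summable h0 h1 (-1) a hm)
    · simpa [pp, sub_eq_add_neg] using this
    · intro j
      have : q ^ (a + m * j) < 1 := pow_lt_one₀ h0 h1 (by omega)
      intro h; linarith
  refine lt_of_le_of_ne ?_ hne.symm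
  refine ge_of_tendsto' (pp_mult h0 h1 a hm).hasProd.tendsto_prod_nat fun n => ?_
  refine Finset.prod_nonneg fun j _ => ?_
  have : q ^ (a + m * j) ≤ 1 := pow_le_one₀ h0 h1.le
  linarith

lemma eulerE_eq_pp (q : ℝ) : eulerE q = pp q 1 1 := by
  simp [eulerE, pp, add_comm]

lemma pp_pow (q : ℝ) (a m r : ℕ) : pp (q ^ r) a m = pp q (r * a) (r * m) := by
  simp only [pp, ← pow_mul]
  congr 1; ext j; ring_nf

lemma eulerE_pow (q : ℝ) (r : ℕ) : eulerE (q ^ r) = pp q r r := by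
  rw [eulerE_eq_pp, pp_pow]; simp

lemma pq_mul_pp {q : ℝ} (h0 : 0 ≤ q) (h1 : q < 1) (a : ℕ) {m : ℕ} (hm : 0 < m) :
    pq q a m * pp q a m = pp q (2 * a) (2 * m) := by
  rw [pq, pp, ← (pq_mult h0 h1 a hm).tprod_mul (pp_mult h0 h1 a hm), pp]
  congr 1; ext j; ring_nf

lemma pp_split {q : ℝ} (h0 : 0 ≤ q) (h1 : q < 1) (a : ℕ) {m : ℕ} (hm : 0 < m) :
    pp q a m = pp q a (2 * m) * pp q (a + m) (2 * m) := by
  have h := tprod_even_mul_odd (f := fun j : ℕ => 1 - q ^ (a + m * j)) ?_ ?_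
  · rw [pp, ← h, pp, pp]
    congr 2 <;> (ext j; ring_nf)
  · convert! pp_mult h0 h1 a (m := 2 * m) (by omega) using 4; ring
  · convert! pp_mult h0 h1 (a + m) (m := 2 * m) (by omega) using 4; ring

lemma pp_split5 {q : ℝ} (h0 : 0 ≤ q) (h1 : q < 1) (a : ℕ) {m : ℕ} (hm : 0 < m) :
    pp q a m = pp q a (5 * m) * pp q (a + m) (5 * m) * pp q (a + 2 * m) (5 * m)
      * pp q (a + 3 * m) (5 * m) * pp q (a + 4 * m) (5 * m) := by
  have hlim := (pp_mult h0 h1 a hm).hasProd.tendsto_prod_nat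
  have h5 : Tendsto (fun n : ℕ => 5 * n) atTop atTop :=
    tendsto_atTop_mono (fun n => by simp only [id]; omega) tendsto_id
  have hl := hlim.comp h5
  have hr (i : ℕ) := (pp_mult h0 h1 (a + i * m) (m := 5 * m) (by omega)).hasProd.tendsto_prod_nat
  have hr' := ((((hr 0).mul (hr 1)).mul (hr 2)).mul (hr 3)).mul (hr 4)
  have := tendsto_nhds_unique hl (hr'.congr fun n => ?_)
  · rw [pp, this]; simp [pp]
  · induction n with
    | zero => simp
    | succ n ih =>
      simp only [Finset.prod_range_succ, Function.comp, show 5 * (n + 1) = 5 * n + 1 + 1 + 1 + 1 + 1 by ring] at ih ⊢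
      rw [← ih]
      ring_nf

/-- finite Pochhammer -/
noncomputable def poch (p : ℝ) (n : ℕ) : ℝ := ∏ j ∈ Finset.range n, (1 - p ^ (j + 1))

/-- inverse Pochhammer, zero at negatives -/
noncomputable def ipo (p : ℝ) (n : ℤ) : ℝ := if n < 0 then 0 else 1 / poch p n.toNat

lemma poch_pos {p : ℝ} (h0 : 0 ≤ p) (h1 : p < 1) (n : ℕ) : 0 < poch p n := by
  refine Finset.prod_pos fun j _ => ?_
  have : p ^ (j + 1) < 1 := pow_lt_one₀ h0 h1 (by omega)
  linarith

lemma poch_succ (p : ℝ) (n : ℕ) : poch p (n + 1) = poch p n * (1 - p ^ (n + 1)) := by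
  simp [poch, Finset.prod_range_succ]

lemma poch_le_one {p : ℝ} (h0 : 0 ≤ p) (h1 : p < 1) (n : ℕ) : poch p n ≤ 1 := by
  refine Finset.prod_le_one (fun j _ => ?_) (fun j _ => ?_)
  · have : p ^ (j + 1) < 1 := pow_lt_one₀ h0 h1 (by omega)
    linarith
  · have : 0 ≤ p ^ (j + 1) := by positivity
    linarith

lemma eulerE_pos {p : ℝ} (h0 : 0 ≤ p) (h1 : p < 1) : 0 < eulerE p := by
  rw [eulerE_eq_pp]; exact pp_pos h0 h1 one_pos one_pos

lemma poch_tendsto {p : ℝ} (h0 : 0 ≤ p) (h1 : p < 1) : Tendsto (poch p) atTop (𝓝 (eulerE p)) := by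
  have := (pp_mult h0 h1 1 one_pos).hasProd.tendsto_prod_nat
  rw [eulerE_eq_pp, pp]
  refine this.congr fun n => ?_
  simp [poch, add_comm]

lemma eulerE_le_poch {p : ℝ} (h0 : 0 ≤ p) (h1 : p < 1) (n : ℕ) : eulerE p ≤ poch p n := by
  have hanti : Antitone (poch p) := antitone_nat_of_succ_le fun n => by
    rw [poch_succ]
    have : 0 ≤ p ^ (n + 1) := by positivity
    nlinarith [poch_pos h0 h1 n]
  exact hanti.le_of_tendsto (poch_tendsto h0 h1) n

lemma ipo_nonneg {p : ℝ} (h0 : 0 ≤ p) (h1 : p < 1) (n : ℤ) : 0 ≤ ipo p n := by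
  unfold ipo; split_ifs
  · exact le_rfl
  · exact (one_div_pos.2 (poch_pos h0 h1 _)).le

lemma ipo_le {p : ℝ} (h0 : 0 ≤ p) (h1 : p < 1) (n : ℤ) : ipo p n ≤ 1 / eulerE p := by
  unfold ipo; split_ifs
  · exact (one_div_pos.2 (eulerE_pos h0 h1)).le
  · exact one_div_le_one_div_of_le (eulerE_pos h0 h1) (eulerE_le_poch h0 h1 _)

lemma ipo_rec {p : ℝ} (h0 : 0 < p) (h1 : p < 1) (n : ℤ) :
    ipo p (n - 1) = (1 - p ^ n) * ipo p n := by
  rcases lt_trichotomy n 0 with h | h | h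
  · simp [ipo, h, show n - 1 < 0 by omega]
  · subst h; simp [ipo]
  · obtain ⟨m, rfl⟩ : ∃ m : ℕ, n = m + 1 := ⟨(n - 1).toNat, by omega⟩
    have e1 : ((m : ℤ) + 1 - 1).toNat = m := by omega
    have e2 : ((m : ℤ) + 1).toNat = m + 1 := by omega
    simp only [ipo, e1, e2, show ¬ ((m : ℤ) + 1 - 1 < 0) by omega, show ¬ ((m : ℤ) + 1 < 0) by omega,
      if_false, poch_succ]
    have := (poch_pos h0.le h1 m).ne'
    have h3 : (1 - p ^ (m + 1)) ≠ 0 := by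
      have : p ^ (m + 1) < 1 := pow_lt_one₀ h0.le h1 (by omega)
      linarith
    have e3 : p ^ ((m : ℤ) + 1) = p ^ (m + 1) := by exact_mod_cast zpow_natCast p (m + 1)
    rw [e3]; field_simp

lemma ipo_tendsto {p : ℝ} (h0 : 0 < p) (h1 : p < 1) (c : ℤ) :
    Tendsto (fun N : ℕ => ipo p ((N : ℤ) + c)) atTop (𝓝 (1 / eulerE p)) := by
  have ht : Tendsto (fun N : ℕ => ((N : ℤ) + c).toNat) atTop atTop := by
    refine tendsto_atTop.2 fun b => ?_
    filter_upwards [eventually_ge_atTop (b + c.natAbs)] with N hN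
    omega
  have := (tendsto_const_nhds (x := (1 : ℝ))).div ((poch_tendsto h0.le h1).comp ht)
    (eulerE_pos h0.le h1).ne'
  refine this.congr' ?_
  filter_upwards [eventually_ge_atTop c.natAbs] with N hN
  simp [ipo, show ¬ ((N : ℤ) + c < 0) by omega]


lemma hasSum_shift {f : ℤ → ℝ} {a : ℝ} (h : HasSum f a) (c : ℤ) : HasSum (fun k => f (k + c)) a :=
  (Equiv.addRight c).hasSum_iff.2 h

lemma zp_mul {s : ℝ} (_ : 0 < s) (n : ℤ) : (s ^ 2) ^ n = (s ^ n) ^ 2 := by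
  rw [← zpow_natCast, ← zpow_natCast, ← zpow_mul, ← zpow_mul, mul_comm]

lemma fin_jtp {s z : ℝ} (h0 : 0 < s) (h1 : s < 1) (hz : z ≠ 0) (N : ℕ) :
    HasSum (fun k : ℤ => z ^ k * s ^ (k ^ 2) *
      (poch (s ^ 2) (2 * N) * ipo (s ^ 2) (N - k) * ipo (s ^ 2) (N + k)))
      (∏ j ∈ Finset.range N, (1 + z * s ^ (2 * j + 1)) * (1 + z⁻¹ * s ^ (2 * j + 1))) := by
  have hp0 : 0 < s ^ 2 := by positivity
  have hp1 : s ^ 2 < 1 := pow_lt_one₀ h0.le h1 (by norm_num)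
  induction N with
  | zero =>
    convert! hasSum_ite_eq (0 : ℤ) (1 : ℝ) using 1
    ext k
    rcases lt_trichotomy k 0 with h | h | h
    · simp [ipo, h, h.ne]
    · subst h; simp [ipo, poch]
    · simp [ipo, h, h.ne']
  | succ N ih =>
    set f := (fun k : ℤ => z ^ k * s ^ (k ^ 2) *
      (poch (s ^ 2) (2 * N) * ipo (s ^ 2) (N - k) * ipo (s ^ 2) (N + k))) with hf
    have hm := hasSum_shift ih (-1)
    have hpl := hasSum_shift ih 1
    rw [Finset.prod_range_succ]
    set Q := ∏ j ∈ Finset.range N, (1 + z * s ^ (2 * j + 1)) * (1 + z⁻¹ * s ^ (2 * j + 1))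
    set A := s ^ (2 * N + 1) with hA
    have := ((ih.mul_left (1 + A ^ 2)).add (hm.mul_left (A * z))).add (hpl.mul_left (A * z⁻¹))
    convert! this using 1
    · ext k
      have r1 := ipo_rec hp0 hp1 (N + 1 - k)
      have r2 := ipo_rec hp0 hp1 (N - k)
      have r3 := ipo_rec hp0 hp1 (N + 1 + k)
      have r4 := ipo_rec hp0 hp1 (N + k)
      rw [show (N + 1 - k - 1 : ℤ) = N - k by ring] at r1
      rw [show (N + 1 + k - 1 : ℤ) = N + k by ring] at r3
      simp only [← sub_eq_add_neg]
      have e1 : (N - (k - 1) : ℤ) = N + 1 - k := by ring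
      have e2 : (N - (k + 1) : ℤ) = N - k - 1 := by ring
      have e3 : (N + (k - 1) : ℤ) = N + k - 1 := by ring
      have e4 : (N + (k + 1) : ℤ) = N + 1 + k := by ring
      simp only [hf, e1, e2, e3, e4, r2, r4, r1, r3]
      push_cast
      set a := ipo (s ^ 2) (N + 1 - k)
      set b := ipo (s ^ 2) (N + 1 + k)
      have hs : s ≠ 0 := h0.ne'
      have p1 : (s ^ 2 : ℝ) ^ (N + 1 - k : ℤ) = (s ^ N) ^ 2 * ((s ^ k)⁻¹) ^ 2 * s ^ 2 := by
        rw [zp_mul h0, zpow_sub₀ hs, zpow_add₀ hs, zpow_natCast, zpow_one]; field_simp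
      have p2 : (s ^ 2 : ℝ) ^ (N - k : ℤ) = (s ^ N) ^ 2 * ((s ^ k)⁻¹) ^ 2 := by
        rw [zp_mul h0, zpow_sub₀ hs, zpow_natCast]; field_simp
      have p3 : (s ^ 2 : ℝ) ^ (N + 1 + k : ℤ) = (s ^ N) ^ 2 * ((s ^ k)) ^ 2 * s ^ 2 := by
        rw [zp_mul h0, zpow_add₀ hs, zpow_add₀ hs, zpow_natCast, zpow_one]; ring
      have p4 : (s ^ 2 : ℝ) ^ (N + k : ℤ) = (s ^ N) ^ 2 * ((s ^ k)) ^ 2 := by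
        rw [zp_mul h0, zpow_add₀ hs, zpow_natCast]; ring
      have p5 : s ^ ((k - 1) ^ 2) = s ^ (k ^ 2) * ((s ^ k)⁻¹) ^ 2 * s := by
        rw [show (k - 1) ^ 2 = k ^ 2 - k - k + 1 by ring, zpow_add₀ hs, zpow_sub₀ hs, zpow_sub₀ hs, zpow_one]
        field_simp
      have p6 : s ^ ((k + 1) ^ 2) = s ^ (k ^ 2) * ((s ^ k)) ^ 2 * s := by
        rw [show (k + 1) ^ 2 = k ^ 2 + k + k + 1 by ring, zpow_add₀ hs, zpow_add₀ hs, zpow_add₀ hs, zpow_one]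
        ring
      have p7 : z ^ (k - 1) = z ^ k * z⁻¹ := by rw [zpow_sub₀ hz]; simp; rfl
      have p8 : z ^ (k + 1) = z ^ k * z := by rw [zpow_add₀ hz]; simp
      have p9 : A = (s ^ N) ^ 2 * s := by rw [hA]; ring
      have p10 : poch (s ^ 2) (2 * (N + 1)) = poch (s ^ 2) (2 * N) * (1 - (s ^ N) ^ 4 * s ^ 2) * (1 - (s ^ N) ^ 4 * s ^ 4) := by
        rw [show 2 * (N + 1) = 2 * N + 1 + 1 by ring, poch_succ, poch_succ]; ring
      rw [p1, p2, p3, p4, p5, p6, p7, p8, p9, p10]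
      have hk : s ^ k ≠ 0 := zpow_ne_zero _ hs
      have hN : s ^ N ≠ 0 := pow_ne_zero _ hs
      generalize s ^ k = V at hk ⊢
      generalize s ^ N = B at hN ⊢
      generalize s ^ (k ^ 2) = S
      generalize z ^ k = Z
      generalize poch (s ^ 2) (2 * N) = P
      clear_value a b
      field_simp
      ring
    · field_simp; ring

lemma summ_exp {x : ℝ} (hx : 0 < x) (y : ℝ) (k : ℕ) :
    Summable (fun n : ℤ => |(n : ℝ)| ^ k * Real.exp (-(x * n ^ 2 + y * n))) := by
  have h := summable_pow_mul_jacobiTheta₂_term_bound (|y| / (2 * π)) (T := x / π) (by positivity) k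
  refine Summable.of_nonneg_of_le (fun n => by positivity) (fun n => ?_) h
  push_cast
  gcongr
  have e : -π * (x / π * (n : ℝ) ^ 2 - 2 * (|y| / (2 * π)) * |(n : ℝ)|) = -(x * n ^ 2 - |y| * |(n : ℝ)|) := by
    field_simp
  rw [e]
  have := neg_abs_le (y * n)
  rw [abs_mul] at this
  linarith

lemma summ_zs {s z : ℝ} (h0 : 0 < s) (h1 : s < 1) (hz : z ≠ 0) (r : ℕ) :
    Summable (fun n : ℤ => |(n : ℝ)| ^ r * (|z| ^ n * s ^ (n ^ 2))) := by
  have h := summ_exp (x := -Real.log s) (by have := Real.log_neg h0 h1; linarith) (-Real.log |z|) r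
  refine h.congr fun n => ?_
  have hz' : 0 < |z| := abs_pos.2 hz
  congr 1
  rw [← Real.rpow_intCast, ← Real.rpow_intCast, Real.rpow_def_of_pos hz', Real.rpow_def_of_pos h0, ← Real.exp_add]
  push_cast; ring_nf

theorem jtp0 {s z : ℝ} (h0 : 0 < s) (h1 : s < 1) (hz : z ≠ 0) :
    ∑' n : ℤ, z ^ n * s ^ (n ^ 2) =
      (∏' j : ℕ, (1 + z * s ^ (1 + 2 * j))) * (∏' j : ℕ, (1 + z⁻¹ * s ^ (1 + 2 * j))) * eulerE (s ^ 2) := by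
  have hp0 : 0 < s ^ 2 := by positivity
  have hp1 : s ^ 2 < 1 := pow_lt_one₀ h0.le h1 (by norm_num)
  have hE := eulerE_pos hp0.le hp1
  set E := eulerE (s ^ 2) with hEd
  have hsum : Summable (fun k : ℤ => ‖z ^ k * s ^ (k ^ 2)‖ * (1 / E * (1 / E))) := by
    refine ((summ_zs h0 h1 hz 0).congr fun n => ?_).mul_right _
    simp only [pow_zero, one_mul, norm_mul, norm_zpow, Real.norm_eq_abs, abs_of_pos h0]
  have hlim := tendsto_tsum_of_dominated_convergence (𝓕 := atTop)
    (f := fun (N : ℕ) (k : ℤ) => z ^ k * s ^ (k ^ 2) *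
      (poch (s ^ 2) (2 * N) * ipo (s ^ 2) (N - k) * ipo (s ^ 2) (N + k)))
    (g := fun k : ℤ => z ^ k * s ^ (k ^ 2) * (E * (1 / E) * (1 / E))) hsum ?_ ?_
  · have hl2 : Tendsto (fun N : ℕ => ∏ j ∈ Finset.range N,
        (1 + z * s ^ (2 * j + 1)) * (1 + z⁻¹ * s ^ (2 * j + 1))) atTop
        (𝓝 ((∏' j : ℕ, (1 + z * s ^ (1 + 2 * j))) * (∏' j : ℕ, (1 + z⁻¹ * s ^ (1 + 2 * j))))) := by
      have := (aux_mult h0.le h1 z 1 (m := 2) (by norm_num)).hasProd.tendsto_prod_nat.mul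
        (aux_mult h0.le h1 z⁻¹ 1 (m := 2) (by norm_num)).hasProd.tendsto_prod_nat
      refine this.congr fun N => ?_
      rw [← Finset.prod_mul_distrib]
      simp only [add_comm 1]
    have := tendsto_nhds_unique hlim (hl2.congr fun N => ((fin_jtp h0 h1 hz N).tsum_eq).symm)
    rw [tsum_mul_right] at this
    rw [← this]; field_simp
  · intro k
    refine Tendsto.const_mul _ (Tendsto.mul (Tendsto.mul ?_ ?_) ?_)
    · exact (poch_tendsto hp0.le hp1).comp (tendsto_atTop_mono (fun n => by simp only [id]; omega) tendsto_id)
    · simpa [sub_eq_add_neg] using ipo_tendsto hp0 hp1 (-k)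
    · exact ipo_tendsto hp0 hp1 k
  · refine Eventually.of_forall fun N k => ?_
    rw [norm_mul]
    gcongr
    have a1 := ipo_nonneg hp0.le hp1 (N - k)
    have a2 := ipo_nonneg hp0.le hp1 (N + k)
    have a3 := poch_pos hp0.le hp1 (2 * N)
    rw [Real.norm_of_nonneg (by positivity)]
    have b1 := ipo_le hp0.le hp1 (N - k)
    have b2 := ipo_le hp0.le hp1 (N + k)
    have b3 := poch_le_one hp0.le hp1 (2 * N)
    calc _ ≤ 1 * (1 / E) * (1 / E) := by gcongr
      _ = _ := by ring

lemma fin_cube {s : ℝ} (h0 : 0 < s) (h1 : s < 1) (N : ℕ) :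
    HasSum (fun k : ℤ => (-1) ^ k * s ^ (k ^ 2 + k) *
      (poch (s ^ 2) (2 * N + 1) * ipo (s ^ 2) (N - k) * ipo (s ^ 2) (N + 1 + k))) 0 ∧
    HasSum (fun k : ℤ => (k : ℝ) * ((-1) ^ k * s ^ (k ^ 2 + k) *
      (poch (s ^ 2) (2 * N + 1) * ipo (s ^ 2) (N - k) * ipo (s ^ 2) (N + 1 + k)))) (poch (s ^ 2) N ^ 2) := by
  have hp0 : 0 < s ^ 2 := by positivity
  have hp1 : s ^ 2 < 1 := pow_lt_one₀ h0.le h1 (by norm_num)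
  induction N with
  | zero =>
    have key : ∀ k : ℤ, ((-1 : ℝ) ^ k * s ^ (k ^ 2 + k) *
      (poch (s ^ 2) (2 * 0 + 1) * ipo (s ^ 2) ((0 : ℕ) - k) * ipo (s ^ 2) ((0 : ℕ) + 1 + k))) =
        (if k = 0 then 1 else 0) + (if k = -1 then -1 else 0) := by
      intro k
      have h3 : (1 - s ^ 2) ≠ 0 := by linarith
      rcases lt_trichotomy k 0 with h | h | h
      · rcases eq_or_lt_of_le (show k ≤ -1 by omega) with h' | h'
        · subst h'; simp [ipo, poch]; field_simp
        · simp [ipo, show 1 + k < 0 by omega, show k ≠ 0 by omega, show k ≠ -1 by omega]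
      · subst h; simp [ipo, poch]; field_simp
      · simp [ipo, h, h.ne', show k ≠ -1 by omega]
    simp only [key]
    constructor
    · convert! (hasSum_ite_eq (0 : ℤ) (1 : ℝ)).add (hasSum_ite_eq (-1 : ℤ) (-1 : ℝ)) using 1
      norm_num
    · convert! (hasSum_ite_eq (-1 : ℤ) (1 : ℝ)) using 1
      · ext k
        by_cases h : k = -1
        · subst h; norm_num
        · by_cases h' : k = 0
          · subst h'; simp
          · simp [h, h']
      · simp [poch]
  | succ N ih =>
    obtain ⟨i0, i1⟩ := ih
    set f := (fun k : ℤ => (-1) ^ k * s ^ (k ^ 2 + k) *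
      (poch (s ^ 2) (2 * N + 1) * ipo (s ^ 2) (N - k) * ipo (s ^ 2) (N + 1 + k))) with hf
    have key : ∀ k : ℤ, ((-1 : ℝ) ^ k * s ^ (k ^ 2 + k) *
      (poch (s ^ 2) (2 * (N + 1) + 1) * ipo (s ^ 2) ((N + 1 : ℕ) - k) * ipo (s ^ 2) ((N + 1 : ℕ) + 1 + k))) =
        (1 + (s ^ (2 * N + 2)) ^ 2) * f k + (- (s ^ (2 * N + 2))) * f (k + -1) + (- (s ^ (2 * N + 2))) * f (k + 1) := by
      intro k
      have r1 := ipo_rec hp0 hp1 (N + 1 - k)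
      have r2 := ipo_rec hp0 hp1 (N - k)
      have r3 := ipo_rec hp0 hp1 (N + 1 + 1 + k)
      have r4 := ipo_rec hp0 hp1 (N + 1 + k)
      rw [show (N + 1 - k - 1 : ℤ) = N - k by ring] at r1
      rw [show (N + 1 + 1 + k - 1 : ℤ) = N + 1 + k by ring] at r3
      simp only [← sub_eq_add_neg]
      have e1 : (N - (k - 1) : ℤ) = N + 1 - k := by ring
      have e2 : (N - (k + 1) : ℤ) = N - k - 1 := by ring
      have e3 : (N + 1 + (k - 1) : ℤ) = N + 1 + k - 1 := by ring
      have e4 : (N + 1 + (k + 1) : ℤ) = N + 1 + 1 + k := by ring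
      simp only [hf, e1, e2, e3, e4, r2, r4, r1, r3]
      push_cast
      set a := ipo (s ^ 2) (N + 1 - k)
      set b := ipo (s ^ 2) (N + 1 + 1 + k)
      have hs : s ≠ 0 := h0.ne'
      have p1 : (s ^ 2 : ℝ) ^ (N + 1 - k : ℤ) = (s ^ N) ^ 2 * ((s ^ k)⁻¹) ^ 2 * s ^ 2 := by
        rw [zp_mul h0, zpow_sub₀ hs, zpow_add₀ hs, zpow_natCast, zpow_one]; field_simp
      have p2 : (s ^ 2 : ℝ) ^ (N - k : ℤ) = (s ^ N) ^ 2 * ((s ^ k)⁻¹) ^ 2 := by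
        rw [zp_mul h0, zpow_sub₀ hs, zpow_natCast]; field_simp
      have p3 : (s ^ 2 : ℝ) ^ (N + 1 + 1 + k : ℤ) = (s ^ N) ^ 2 * ((s ^ k)) ^ 2 * s ^ 4 := by
        rw [zp_mul h0, zpow_add₀ hs, zpow_add₀ hs, zpow_add₀ hs, zpow_natCast, zpow_one]; ring
      have p4 : (s ^ 2 : ℝ) ^ (N + 1 + k : ℤ) = (s ^ N) ^ 2 * ((s ^ k)) ^ 2 * s ^ 2 := by
        rw [zp_mul h0, zpow_add₀ hs, zpow_add₀ hs, zpow_natCast, zpow_one]; ring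
      have p5 : s ^ ((k - 1) ^ 2 + (k - 1)) = s ^ (k ^ 2 + k) * ((s ^ k)⁻¹) ^ 2 := by
        rw [show (k - 1) ^ 2 + (k - 1) = k ^ 2 + k - k - k by ring, zpow_sub₀ hs, zpow_sub₀ hs]
        field_simp
      have p6 : s ^ ((k + 1) ^ 2 + (k + 1)) = s ^ (k ^ 2 + k) * ((s ^ k)) ^ 2 * s ^ 2 := by
        rw [show (k + 1) ^ 2 + (k + 1) = k ^ 2 + k + k + k + 1 + 1 by ring, zpow_add₀ hs, zpow_add₀ hs, zpow_add₀ hs, zpow_add₀ hs, zpow_one]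
        ring
      have hz : (-1 : ℝ) ≠ 0 := by norm_num
      have p7 : (-1 : ℝ) ^ (k - 1) = - (-1) ^ k := by rw [zpow_sub₀ hz, zpow_one, div_neg, div_one]
      have p8 : (-1 : ℝ) ^ (k + 1) = - (-1) ^ k := by rw [zpow_add₀ hz]; simp
      have p9 : s ^ (2 * N + 2) = (s ^ N) ^ 2 * s ^ 2 := by ring
      have p10 : poch (s ^ 2) (2 * (N + 1) + 1) = poch (s ^ 2) (2 * N + 1) * (1 - (s ^ N) ^ 4 * s ^ 4) * (1 - (s ^ N) ^ 4 * s ^ 6) := by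
        rw [show 2 * (N + 1) + 1 = 2 * N + 1 + 1 + 1 by ring, poch_succ, poch_succ (s ^ 2) (2 * N + 1)]; ring
      rw [p1, p2, p3, p4, p5, p6, p7, p8, p9, p10]
      have hk : s ^ k ≠ 0 := zpow_ne_zero _ hs
      have hN : s ^ N ≠ 0 := pow_ne_zero _ hs
      generalize s ^ k = V at hk ⊢
      generalize s ^ N = B at hN ⊢
      generalize s ^ (k ^ 2 + k) = S
      generalize (-1 : ℝ) ^ k = Z
      generalize poch (s ^ 2) (2 * N + 1) = P
      clear_value a b
      field_simp
      ring
    simp only [key]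
    constructor
    · convert! ((i0.mul_left (1 + (s ^ (2 * N + 2)) ^ 2)).add ((hasSum_shift i0 (-1)).mul_left
        (- (s ^ (2 * N + 2))))).add ((hasSum_shift i0 1).mul_left (- (s ^ (2 * N + 2)))) using 1
      ring
    · have j1 := (hasSum_shift i1 (-1)).add (hasSum_shift i0 (-1))
      have j2 := (hasSum_shift i1 1).sub (hasSum_shift i0 1)
      convert! ((i1.mul_left (1 + (s ^ (2 * N + 2)) ^ 2)).add (j1.mul_left
        (- (s ^ (2 * N + 2))))).add (j2.mul_left (- (s ^ (2 * N + 2)))) using 1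
      · ext k; push_cast; ring
      · rw [poch_succ]; ring

theorem cube0 {s : ℝ} (h0 : 0 < s) (h1 : s < 1) :
    ∑' k : ℤ, (k : ℝ) * ((-1) ^ k * s ^ (k ^ 2 + k)) = eulerE (s ^ 2) ^ 3 := by
  have hp0 : 0 < s ^ 2 := by positivity
  have hp1 : s ^ 2 < 1 := pow_lt_one₀ h0.le h1 (by norm_num)
  have hE := eulerE_pos hp0.le hp1
  set E := eulerE (s ^ 2) with hEd
  have hsum : Summable (fun k : ℤ => ‖(k : ℝ) * ((-1) ^ k * s ^ (k ^ 2 + k))‖ * (1 / E * (1 / E))) := by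
    refine ((summ_zs h0 h1 h0.ne' 1).congr fun n => ?_).mul_right _
    simp only [pow_one, norm_mul, norm_zpow, Real.norm_eq_abs, abs_of_pos h0, abs_neg, abs_one, one_zpow, one_mul]
    rw [add_comm, zpow_add₀ h0.ne']
  have hlim := tendsto_tsum_of_dominated_convergence (𝓕 := atTop)
    (f := fun (N : ℕ) (k : ℤ) => (k : ℝ) * ((-1) ^ k * s ^ (k ^ 2 + k)) *
      (poch (s ^ 2) (2 * N + 1) * ipo (s ^ 2) (N - k) * ipo (s ^ 2) (N + 1 + k)))
    (g := fun k : ℤ => (k : ℝ) * ((-1) ^ k * s ^ (k ^ 2 + k)) * (E * (1 / E) * (1 / E))) hsum ?_ ?_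
  · have hl2 : Tendsto (fun N : ℕ => poch (s ^ 2) N ^ 2) atTop (𝓝 (E ^ 2)) :=
      (poch_tendsto hp0.le hp1).pow 2
    have := tendsto_nhds_unique hlim (hl2.congr fun N => ?_)
    · rw [tsum_mul_right] at this
      rw [pow_succ, ← this]; field_simp
    · rw [← (fin_cube h0 h1 N).2.tsum_eq]
      simp only [mul_assoc]
  · intro k
    refine Tendsto.const_mul _ (Tendsto.mul (Tendsto.mul ?_ ?_) ?_)
    · exact (poch_tendsto hp0.le hp1).comp (tendsto_atTop_mono (fun n => by simp only [id]; omega) tendsto_id)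
    · simpa [sub_eq_add_neg] using ipo_tendsto hp0 hp1 (-k)
    · simpa [add_assoc] using ipo_tendsto hp0 hp1 (1 + k)
  · refine Eventually.of_forall fun N k => ?_
    rw [norm_mul]
    gcongr
    have a1 := ipo_nonneg hp0.le hp1 (N - k)
    have a2 := ipo_nonneg hp0.le hp1 (N + 1 + k)
    have a3 := poch_pos hp0.le hp1 (2 * N + 1)
    rw [Real.norm_of_nonneg (by positivity)]
    have b1 := ipo_le hp0.le hp1 (N - k)
    have b2 := ipo_le hp0.le hp1 (N + 1 + k)
    have b3 := poch_le_one hp0.le hp1 (2 * N + 1)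
    calc _ ≤ 1 * (1 / E) * (1 / E) := by gcongr
      _ = _ := by ring


lemma rexp_zpow (x : ℝ) (n : ℤ) : Real.exp x ^ n = Real.exp (n * x) := by
  rw [← Real.rpow_intCast, ← Real.exp_mul, mul_comm]

/-- theta series -/
noncomputable def th (ε x y : ℝ) : ℝ := ∑' n : ℤ, ε ^ n * Real.exp (-(x * n ^ 2 + y * n))

lemma th_summ {ε x : ℝ} (hε : |ε| = 1) (hx : 0 < x) (y : ℝ) :
    Summable (fun n : ℤ => ‖ε ^ n * Real.exp (-(x * n ^ 2 + y * n))‖) := by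
  refine (summ_exp hx y 0).congr fun n => ?_
  rw [norm_mul, norm_zpow, Real.norm_eq_abs, hε, Real.norm_of_nonneg (Real.exp_pos _).le]; simp

lemma th_prod {ε x : ℝ} (hε : |ε| = 1) (hx : 0 < x) (y : ℝ) :
    th ε x y = (∏' j : ℕ, (1 + ε * Real.exp (-(x + y + 2 * x * j)))) *
      (∏' j : ℕ, (1 + ε * Real.exp (-(x - y + 2 * x * j)))) * eulerE (Real.exp (-(2 * x))) := by
  have hε' : ε⁻¹ = ε := by
    rcases abs_eq (zero_le_one) |>.1 hε with h | h <;> subst h <;> norm_num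
  have hε0 : ε ≠ 0 := by rintro rfl; simp at hε
  have h := jtp0 (s := Real.exp (-x)) (z := ε * Real.exp (-y)) (Real.exp_pos _) (by simpa using hx)
    (mul_ne_zero hε0 (Real.exp_pos _).ne')
  have e1 : ∀ n : ℤ, (ε * Real.exp (-y)) ^ n * Real.exp (-x) ^ (n ^ 2) =
      ε ^ n * Real.exp (-(x * n ^ 2 + y * n)) := by
    intro n
    rw [mul_zpow, rexp_zpow, rexp_zpow, mul_assoc, ← Real.exp_add]
    push_cast; ring_nf
  have e2 : ∀ j : ℕ, 1 + (ε * Real.exp (-y)) * Real.exp (-x) ^ (1 + 2 * j) =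
      1 + ε * Real.exp (-(x + y + 2 * x * j)) := by
    intro j
    rw [← Real.exp_nat_mul, mul_assoc, ← Real.exp_add]
    push_cast; ring_nf
  have e3 : ∀ j : ℕ, 1 + (ε * Real.exp (-y))⁻¹ * Real.exp (-x) ^ (1 + 2 * j) =
      1 + ε * Real.exp (-(x - y + 2 * x * j)) := by
    intro j
    rw [mul_inv, hε', ← Real.exp_neg, ← Real.exp_nat_mul, mul_assoc, ← Real.exp_add]
    push_cast; ring_nf
  simp only [e1, e2, e3] at h
  rw [th, h, ← Real.exp_nat_mul]
  push_cast; ring_nf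

lemma exp_prog (t : ℝ) (a m j : ℕ) : Real.exp (-(a * t + m * t * j)) = Real.exp (-t) ^ (a + m * j) := by
  rw [← Real.exp_nat_mul]; push_cast; ring_nf

lemma th_neg {t : ℝ} (ht : 0 < t) (a b : ℕ) (hab : 0 < a + b) {x y : ℝ} (hx : x = (a + b) * t / 2)
    (hy : y = (a - b) * t / 2) :
    th (-1) x y = pp (Real.exp (-t)) a (a + b) * pp (Real.exp (-t)) b (a + b) *
      pp (Real.exp (-t)) (a + b) (a + b) := by
  have hab' : (0 : ℝ) < (a + b : ℝ) := by exact_mod_cast hab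
  rw [th_prod (by norm_num) (by rw [hx]; positivity), ← eulerE_pow, ← Real.exp_nat_mul, pp, pp]
  simp only [← exp_prog]
  subst hx hy
  congr 1
  · congr 2 <;> ext j <;> rw [neg_one_mul, ← sub_eq_add_neg] <;> push_cast <;> ring_nf
  · push_cast; ring_nf

lemma th_pos {t : ℝ} (ht : 0 < t) (a b : ℕ) (hab : 0 < a + b) {x y : ℝ} (hx : x = (a + b) * t / 2)
    (hy : y = (a - b) * t / 2) :
    th 1 x y = pq (Real.exp (-t)) a (a + b) * pq (Real.exp (-t)) b (a + b) *
      pp (Real.exp (-t)) (a + b) (a + b) := by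
  have hab' : (0 : ℝ) < (a + b : ℝ) := by exact_mod_cast hab
  rw [th_prod (by norm_num) (by rw [hx]; positivity), ← eulerE_pow, ← Real.exp_nat_mul, pq, pq]
  simp only [← exp_prog]
  subst hx hy
  congr 1
  · congr 2 <;> ext j <;> rw [one_mul] <;> push_cast <;> ring_nf
  · push_cast; ring_nf

/-- classes modulo `2 + i` -/
def gEquiv : Fin 5 × (ℤ × ℤ) ≃ ℤ × ℤ where
  toFun p := ((p.1 : ℕ) + 2 * p.2.1 - p.2.2, p.2.1 + 2 * p.2.2)
  invFun z := (⟨((z.1 - 2 * z.2) % 5).toNat, by omega⟩,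
    ((2 * (z.1 - (z.1 - 2 * z.2) % 5) + z.2) / 5, (2 * z.2 - (z.1 - (z.1 - 2 * z.2) % 5)) / 5))
  left_inv := by
    rintro ⟨⟨j, hj⟩, a, b⟩
    simp only [Prod.mk.injEq, Fin.mk.injEq]
    refine ⟨by omega, by omega, by omega⟩
  right_inv := by
    rintro ⟨x, y⟩
    simp only [Prod.mk.injEq]
    constructor <;> omega

lemma gauss5 {F : ℤ × ℤ → ℝ} (hF : Summable F) :
    ∑' z, F z = ∑' w : ℤ × ℤ, F (2 * w.1 - w.2, w.1 + 2 * w.2) +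
      ∑' w : ℤ × ℤ, F (1 + 2 * w.1 - w.2, w.1 + 2 * w.2) +
      ∑' w : ℤ × ℤ, F (2 + 2 * w.1 - w.2, w.1 + 2 * w.2) +
      ∑' w : ℤ × ℤ, F (3 + 2 * w.1 - w.2, w.1 + 2 * w.2) +
      ∑' w : ℤ × ℤ, F (4 + 2 * w.1 - w.2, w.1 + 2 * w.2) := by
  have h1 : Summable (fun p => F (gEquiv p)) := gEquiv.summable_iff.2 hF
  rw [← gEquiv.tsum_eq F, h1.tsum_prod, tsum_fintype, Fin.sum_univ_five]
  simp [gEquiv]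

lemma gaussA {F : ℤ × ℤ → ℝ} (hF : Summable F) (hr : ∀ a b, F (-b, a) = F (a, b)) :
    ∑' z, F z = ∑' w : ℤ × ℤ, F (2 * w.1 - w.2, w.1 + 2 * w.2) +
      4 * ∑' w : ℤ × ℤ, F (1 + 2 * w.1 - w.2, w.1 + 2 * w.2) := by
  rw [gauss5 hF]
  let G : ℤ × ℤ → ℝ := fun w => F (1 + 2 * w.1 - w.2, w.1 + 2 * w.2)
  let e2 : ℤ × ℤ ≃ ℤ × ℤ := ⟨fun w => (-w.2, w.1 + 1), fun w => (w.2 - 1, -w.1), fun w => by simp, fun w => by simp⟩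
  let e3 : ℤ × ℤ ≃ ℤ × ℤ := ⟨fun w => (w.2 - 1, -(w.1 + 1)), fun w => (-w.2 - 1, w.1 + 1), fun w => by simp, fun w => by simp⟩
  let e4 : ℤ × ℤ ≃ ℤ × ℤ := ⟨fun w => (-(w.1 + 2), 1 - w.2), fun w => (-w.1 - 2, 1 - w.2), fun w => by simp, fun w => by simp⟩
  have h2 : ∑' w : ℤ × ℤ, F (2 + 2 * w.1 - w.2, w.1 + 2 * w.2) = ∑' w, G w := by
    rw [← e2.tsum_eq G]
    congr 1; ext w
    rw [← hr]
    simp only [G, e2, Equiv.coe_fn_mk]; congr 2 <;> ring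
  have h3 : ∑' w : ℤ × ℤ, F (3 + 2 * w.1 - w.2, w.1 + 2 * w.2) = ∑' w, G w := by
    rw [← e3.tsum_eq G]
    congr 1; ext w
    rw [← hr, ← hr, ← hr]
    simp only [G, e3, Equiv.coe_fn_mk]; congr 2 <;> ring
  have h4 : ∑' w : ℤ × ℤ, F (4 + 2 * w.1 - w.2, w.1 + 2 * w.2) = ∑' w, G w := by
    rw [← e4.tsum_eq G]
    congr 1; ext w
    rw [← hr, ← hr]
    simp only [G, e4, Equiv.coe_fn_mk]; congr 2 <;> ring
  rw [h2, h3, h4]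
  ring

lemma gaussB {F : ℤ × ℤ → ℝ} (hF : Summable F) (hr : ∀ a b, F (-b - 1, a) = F (a, b)) :
    ∑' z, F z = ∑' w : ℤ × ℤ, F (2 * w.1 - w.2, w.1 + 2 * w.2 + 1) +
      4 * ∑' w : ℤ × ℤ, F (2 * w.1 - w.2 - 1, w.1 + 2 * w.2 - 1) := by
  rw [gauss5 hF]
  let G : ℤ × ℤ → ℝ := fun w => F (2 * w.1 - w.2 - 1, w.1 + 2 * w.2 - 1)
  let H : ℤ × ℤ → ℝ := fun w => F (2 * w.1 - w.2, w.1 + 2 * w.2 + 1)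
  let e0 : ℤ × ℤ ≃ ℤ × ℤ := ⟨fun w => (-w.1, -w.2), fun w => (-w.1, -w.2), fun w => by simp, fun w => by simp⟩
  let e1 : ℤ × ℤ ≃ ℤ × ℤ := ⟨fun w => (w.1 + 1, w.2), fun w => (w.1 - 1, w.2), fun w => by simp, fun w => by simp⟩
  let e2 : ℤ × ℤ ≃ ℤ × ℤ := ⟨fun w => (w.2, -1 - w.1), fun w => (-1 - w.2, w.1), fun w => by simp, fun w => by simp⟩
  let e3 : ℤ × ℤ ≃ ℤ × ℤ := ⟨fun w => (w.1 + 1, w.2 - 1), fun w => (w.1 - 1, w.2 + 1), fun w => by simp, fun w => by simp⟩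
  let e4 : ℤ × ℤ ≃ ℤ × ℤ := ⟨fun w => (1 - w.2, 2 + w.1), fun w => (w.2 - 2, 1 - w.1), fun w => by simp, fun w => by simp⟩
  have h0 : ∑' w : ℤ × ℤ, F (2 * w.1 - w.2, w.1 + 2 * w.2) = ∑' w, G w := by
    rw [← e0.tsum_eq G]
    congr 1; ext w
    rw [← hr, ← hr]
    simp only [G, e0, Equiv.coe_fn_mk]; congr 2 <;> ring
  have h1 : ∑' w : ℤ × ℤ, F (1 + 2 * w.1 - w.2, w.1 + 2 * w.2) = ∑' w, G w := by
    rw [← e1.tsum_eq G]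
    congr 1; ext w
    simp only [G, e1, Equiv.coe_fn_mk]; congr 2 <;> ring
  have h2 : ∑' w : ℤ × ℤ, F (2 + 2 * w.1 - w.2, w.1 + 2 * w.2) = ∑' w, G w := by
    rw [← e2.tsum_eq G]
    congr 1; ext w
    rw [← hr, ← hr, ← hr]
    simp only [G, e2, Equiv.coe_fn_mk]; congr 2 <;> ring
  have h3 : ∑' w : ℤ × ℤ, F (3 + 2 * w.1 - w.2, w.1 + 2 * w.2) = ∑' w, H w := by
    rw [← e3.tsum_eq H]
    congr 1; ext w
    simp only [H, e3, Equiv.coe_fn_mk]; congr 2 <;> ring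
  have h4 : ∑' w : ℤ × ℤ, F (4 + 2 * w.1 - w.2, w.1 + 2 * w.2) = ∑' w, G w := by
    rw [← e4.tsum_eq G]
    congr 1; ext w
    rw [← hr]
    simp only [G, e4, Equiv.coe_fn_mk]; congr 2 <;> ring
  rw [h0, h1, h2, h3, h4]
  ring


lemma sgn_congr {m n : ℤ} (k : ℤ) (h : m = n + 2 * k) : (-1 : ℝ) ^ m = (-1) ^ n := by
  rw [h, zpow_add₀ (by norm_num), zpow_mul]; norm_num

lemma sgn_add (m n : ℤ) : (-1 : ℝ) ^ (m + n) = (-1) ^ m * (-1) ^ n :=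
  zpow_add₀ (by norm_num) _ _

lemma th_mul {ε x x' y y' : ℝ} (hε : |ε| = 1) (hx : 0 < x) (hx' : 0 < x') :
    th ε x y * th ε x' y' = ∑' z : ℤ × ℤ, (ε ^ z.1 * Real.exp (-(x * z.1 ^ 2 + y * z.1))) *
      (ε ^ z.2 * Real.exp (-(x' * z.2 ^ 2 + y' * z.2))) :=
  tsum_mul_tsum_of_summable_norm (th_summ hε hx y) (th_summ hε hx' y')

lemma th_mul_summ {ε x x' : ℝ} (y y' : ℝ) (hε : |ε| = 1) (hx : 0 < x) (hx' : 0 < x') :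
    Summable (fun z : ℤ × ℤ => (ε ^ z.1 * Real.exp (-(x * z.1 ^ 2 + y * z.1))) *
      (ε ^ z.2 * Real.exp (-(x' * z.2 ^ 2 + y' * z.2)))) :=
  summable_mul_of_summable_norm (th_summ hε hx y) (th_summ hε hx' y')

lemma th_I3 {t : ℝ} (ht : 0 < t) :
    th (-1) t 0 ^ 2 = th (-1) (5 * t) 0 ^ 2 -
      4 * Real.exp (-t) * (th (-1) (5 * t) (4 * t) * th (-1) (5 * t) (-2 * t)) := by
  have h1 : |(-1 : ℝ)| = 1 := by norm_num
  have h5 : 0 < 5 * t := by linarith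
  rw [pow_two, pow_two, th_mul h1 ht ht, th_mul h1 h5 h5, th_mul h1 h5 h5,
    gaussA (th_mul_summ 0 0 h1 ht ht)]
  · rw [sub_eq_add_neg]
    congr 1
    · congr 1; ext w
      rw [sgn_congr (n := w.2) (w.1 - w.2) (by ring), sgn_congr (m := w.1 + 2 * w.2) (n := w.1) w.2 (by ring)]
      rw [mul_mul_mul_comm, mul_mul_mul_comm ((-1 : ℝ) ^ w.1), ← Real.exp_add, ← Real.exp_add]
      push_cast; ring_nf
    · rw [← neg_mul]
      simp only [← tsum_mul_left]
      congr 1; ext w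
      rw [sgn_congr (n := 1 + w.2) (w.1 - w.2) (by ring), sgn_congr (m := w.1 + 2 * w.2) (n := w.1) w.2 (by ring),
        sgn_add]
      have : Real.exp (-(t * ((1 + 2 * w.1 - w.2 : ℤ) : ℝ) ^ 2 + 0 * ((1 + 2 * w.1 - w.2 : ℤ) : ℝ))) *
        Real.exp (-(t * ((w.1 + 2 * w.2 : ℤ) : ℝ) ^ 2 + 0 * ((w.1 + 2 * w.2 : ℤ) : ℝ))) =
        Real.exp (-t) * (Real.exp (-(5 * t * (w.1 : ℝ) ^ 2 + 4 * t * w.1)) * Real.exp (-(5 * t * (w.2 : ℝ) ^ 2 + -2 * t * w.2))) := by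
        rw [← Real.exp_add, ← Real.exp_add, ← Real.exp_add]; push_cast; ring_nf
      linear_combination (-4 * (-1) ^ w.1 * (-1) ^ w.2) * this
  · intro a b
    rw [sgn_congr (m := -b) (n := b) (-b) (by ring), mul_comm]
    push_cast; ring_nf

lemma th_I2 {t : ℝ} (ht : 0 < t) :
    th 1 (t / 2) (t / 2) ^ 2 = Real.exp (-t) * th 1 (5 * t / 2) (5 * t / 2) ^ 2 +
      4 * (th 1 (5 * t / 2) (-3 * t / 2) * th 1 (5 * t / 2) (-t / 2)) := by
  have h1 : |(1 : ℝ)| = 1 := by norm_num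
  have h2 : 0 < t / 2 := by linarith
  have h5 : 0 < 5 * t / 2 := by linarith
  rw [pow_two, pow_two, th_mul h1 h2 h2, th_mul h1 h5 h5, th_mul h1 h5 h5,
    gaussB (th_mul_summ _ _ h1 h2 h2)]
  · simp only [one_zpow, one_mul, ← Real.exp_add, ← tsum_mul_left]
    congr 1
    · congr 1; ext w; push_cast; ring_nf
    · congr 1; ext w; congr 2; push_cast; ring_nf
  · intro a b
    simp only [one_zpow, one_mul, ← Real.exp_add]
    push_cast; ring_nf

lemma pq_eq {q : ℝ} (h0 : 0 ≤ q) (h1 : q < 1) {a m : ℕ} (ha : 0 < a) (hm : 0 < m) :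
    pq q a m = pp q (2 * a) (2 * m) / pp q a m := by
  rw [eq_div_iff (pp_pos h0 h1 ha hm).ne', pq_mul_pp h0 h1 a hm]

lemma pq_zero {q : ℝ} (h0 : 0 ≤ q) (h1 : q < 1) {m : ℕ} (hm : 0 < m) :
    pq q 0 m = 2 * pq q m m := by
  have h := tprod_eq_zero_mul' (f := fun j : ℕ => 1 + q ^ (0 + m * j)) (by
    refine (pq_mult h0 h1 m hm).congr fun j => ?_
    ring_nf)
  rw [pq, h, pq]
  congr 1
  · norm_num
  · congr 1; ext j; ring_nf

lemma E1_eq {q : ℝ} (h0 : 0 ≤ q) (h1 : q < 1) : eulerE q = pp q 1 10 * pp q 2 10 * pp q 3 10 * pp q 4 10 *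
    pp q 5 10 * pp q 6 10 * pp q 7 10 * pp q 8 10 * pp q 9 10 * pp q 10 10 := by
  rw [eulerE_eq_pp, pp_split h0 h1 1 one_pos, pp_split5 h0 h1 1 (by norm_num), pp_split5 h0 h1 (1 + 1) (by norm_num)]
  norm_num; ring

lemma E2_eq {q : ℝ} (h0 : 0 ≤ q) (h1 : q < 1) : eulerE (q ^ 2) = pp q 2 10 * pp q 4 10 *
    pp q 6 10 * pp q 8 10 * pp q 10 10 := by
  rw [eulerE_pow, pp_split5 h0 h1 2 (by norm_num)]

lemma E5_eq {q : ℝ} (h0 : 0 ≤ q) (h1 : q < 1) : eulerE (q ^ 5) = pp q 5 10 * pp q 10 10 := by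
  rw [eulerE_pow, pp_split h0 h1 5 (by norm_num)]

lemma E10_eq (q : ℝ) : eulerE (q ^ 10) = pp q 10 10 := eulerE_pow q 10

lemma ex_q {t : ℝ} (ht : 0 < t) : 0 ≤ Real.exp (-t) ∧ Real.exp (-t) < 1 :=
  ⟨(Real.exp_pos _).le, by simpa using ht⟩

lemma phi1 {t : ℝ} (ht : 0 < t) : th (-1) t 0 = eulerE (Real.exp (-t)) ^ 2 / eulerE (Real.exp (-t) ^ 2) := by
  obtain ⟨h0, h1⟩ := ex_q ht
  have e := pp_split h0 h1 1 one_pos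
  have p := pp_pos h0 h1 (a := 2) (m := 2) (by norm_num) (by norm_num)
  rw [th_neg ht 1 1 (by norm_num) (by push_cast; ring) (by push_cast; ring), eulerE_pow, eulerE_eq_pp, e]
  norm_num; field_simp

lemma phi5 {t : ℝ} (ht : 0 < t) : th (-1) (5 * t) 0 = eulerE (Real.exp (-t) ^ 5) ^ 2 / eulerE (Real.exp (-t) ^ 10) := by
  obtain ⟨h0, h1⟩ := ex_q ht
  have p := pp_pos h0 h1 (a := 10) (m := 10) (by norm_num) (by norm_num)
  rw [th_neg ht 5 5 (by norm_num) (by push_cast; ring) (by push_cast; ring), E5_eq h0 h1, E10_eq]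
  norm_num; field_simp

lemma psi1 {t : ℝ} (ht : 0 < t) : th 1 (t / 2) (t / 2) = 2 * eulerE (Real.exp (-t) ^ 2) ^ 2 / eulerE (Real.exp (-t)) := by
  obtain ⟨h0, h1⟩ := ex_q ht
  have p := pp_pos h0 h1 (a := 1) (m := 1) (by norm_num) (by norm_num)
  rw [th_pos ht 1 0 (by norm_num) (by push_cast; ring) (by push_cast; ring), eulerE_pow, eulerE_eq_pp]
  norm_num
  rw [pq_zero h0 h1 one_pos, pq_eq h0 h1 one_pos one_pos]
  norm_num only
  field_simp

lemma psi5 {t : ℝ} (ht : 0 < t) : th 1 (5 * t / 2) (5 * t / 2) =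
    2 * eulerE (Real.exp (-t) ^ 10) ^ 2 / eulerE (Real.exp (-t) ^ 5) := by
  obtain ⟨h0, h1⟩ := ex_q ht
  have p := pp_pos h0 h1 (a := 5) (m := 5) (by norm_num) (by norm_num)
  rw [th_pos ht 5 0 (by norm_num) (by push_cast; ring) (by push_cast; ring), eulerE_pow, eulerE_pow]
  norm_num
  rw [pq_zero h0 h1 (by norm_num), pq_eq h0 h1 (by norm_num) (by norm_num)]
  field_simp

lemma I3 {t : ℝ} (ht : 0 < t) {q : ℝ} (hq : q = Real.exp (-t)) :
    eulerE (q ^ 5) ^ 4 / eulerE (q ^ 10) ^ 2 - eulerE q ^ 4 / eulerE (q ^ 2) ^ 2 =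
      4 * q * eulerE q * eulerE (q ^ 10) ^ 3 / (eulerE (q ^ 2) * eulerE (q ^ 5)) := by
  have h := th_I3 ht
  obtain ⟨h0, h1⟩ := ex_q ht
  rw [phi1 ht, phi5 ht, th_neg ht 9 1 (by norm_num) (by push_cast; ring) (by push_cast; ring),
    th_neg ht 3 7 (by norm_num) (by push_cast; ring) (by push_cast; ring)] at h
  norm_num only at h
  rw [← hq] at h h0 h1
  have e : pp q 9 10 * pp q 1 10 * pp q 10 10 * (pp q 3 10 * pp q 7 10 * pp q 10 10) =
    eulerE q * eulerE (q ^ 10) ^ 3 / (eulerE (q ^ 2) * eulerE (q ^ 5)) := by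
    have P : ∀ a : ℕ, 0 < a → pp q a 10 ≠ 0 := fun a ha => (pp_pos h0 h1 ha (by norm_num)).ne'
    have p2 := P 2 (by norm_num)
    have p4 := P 4 (by norm_num)
    have p6 := P 6 (by norm_num)
    have p8 := P 8 (by norm_num)
    have p5 := P 5 (by norm_num)
    have p10 := P 10 (by norm_num)
    rw [E1_eq h0 h1, E2_eq h0 h1, E5_eq h0 h1, E10_eq]
    field_simp
  rw [e] at h
  rw [div_pow, div_pow, ← pow_mul, ← pow_mul] at h
  norm_num only at h
  linear_combination (-1) * h

lemma I2 {t : ℝ} (ht : 0 < t) {q : ℝ} (hq : q = Real.exp (-t)) :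
    eulerE (q ^ 2) ^ 4 / eulerE q ^ 2 - q * (eulerE (q ^ 10) ^ 4 / eulerE (q ^ 5) ^ 2) =
      eulerE (q ^ 2) * eulerE (q ^ 5) ^ 3 / (eulerE q * eulerE (q ^ 10)) := by
  have h := th_I2 ht
  obtain ⟨h0, h1⟩ := ex_q ht
  rw [psi1 ht, psi5 ht, th_pos ht 1 4 (by norm_num) (by push_cast; ring) (by push_cast; ring),
    th_pos ht 2 3 (by norm_num) (by push_cast; ring) (by push_cast; ring)] at h
  norm_num only at h
  rw [← hq] at h h0 h1
  have e : pq q 1 5 * pq q 4 5 * pp q 5 5 * (pq q 2 5 * pq q 3 5 * pp q 5 5) =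
    eulerE (q ^ 2) * eulerE (q ^ 5) ^ 3 / (eulerE q * eulerE (q ^ 10)) := by
    have P : ∀ a : ℕ, 0 < a → pp q a 10 ≠ 0 := fun a ha => (pp_pos h0 h1 ha (by norm_num)).ne'
    have p1 := P 1 (by norm_num)
    have p2 := P 2 (by norm_num)
    have p3 := P 3 (by norm_num)
    have p4 := P 4 (by norm_num)
    have p6 := P 6 (by norm_num)
    have p7 := P 7 (by norm_num)
    have p8 := P 8 (by norm_num)
    have p9 := P 9 (by norm_num)
    have p5 := P 5 (by norm_num)
    have p10 := P 10 (by norm_num)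
    rw [pq_eq h0 h1 (by norm_num) (by norm_num), pq_eq h0 h1 (by norm_num) (by norm_num),
      pq_eq h0 h1 (by norm_num) (by norm_num), pq_eq h0 h1 (by norm_num) (by norm_num),
      pp_split h0 h1 1 (m := 5) (by norm_num), pp_split h0 h1 2 (m := 5) (by norm_num),
      pp_split h0 h1 3 (m := 5) (by norm_num), pp_split h0 h1 4 (m := 5) (by norm_num),
      pp_split h0 h1 5 (m := 5) (by norm_num), E1_eq h0 h1, E2_eq h0 h1, E5_eq h0 h1, E10_eq]
    norm_num only
    field_simp
  rw [e] at h
  rw [div_pow, div_pow, mul_pow, mul_pow, ← pow_mul, ← pow_mul] at h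
  norm_num only at h
  linear_combination (1 / 4) * h


lemma summ_poly {x : ℝ} (hx : 0 < x) (y α β : ℝ) {k : ℕ} (hk : k ≤ 2) :
    Summable (fun n : ℤ => ‖(-1 : ℝ) ^ n * (α * n + β) ^ k * Real.exp (-(x * n ^ 2 + y * n))‖) := by
  have h := ((summ_exp hx y 0).mul_left (1 + 2 * β ^ 2)).add ((summ_exp hx y 2).mul_left (2 * α ^ 2))
  refine Summable.of_nonneg_of_le (fun n => norm_nonneg _) (fun n => ?_) h
  have e : ‖(-1 : ℝ) ^ n * (α * n + β) ^ k * Real.exp (-(x * n ^ 2 + y * n))‖ =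
      |α * n + β| ^ k * Real.exp (-(x * n ^ 2 + y * n)) := by
    rw [norm_mul, norm_mul, norm_zpow, norm_pow, Real.norm_of_nonneg (Real.exp_pos _).le]; simp
  rw [e, pow_zero, one_mul, ← mul_assoc, ← add_mul]
  gcongr
  set z := α * n + β with hz
  have h1 : |z| ^ k ≤ 1 + z ^ 2 := by
    have hh := sq_abs z
    interval_cases k
    · simp; positivity
    · nlinarith [sq_nonneg (|z| - 1), abs_nonneg z]
    · linarith
  have h2 : z ^ 2 ≤ 2 * β ^ 2 + 2 * α ^ 2 * |(n : ℝ)| ^ 2 := by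
    rw [sq_abs]; nlinarith [sq_nonneg (α * n - β)]
  linarith

/-- odd theta moments -/
noncomputable def fk (t : ℝ) (k : ℕ) (m : ℤ) : ℝ := (-1 : ℝ) ^ m * (2 * m + 1) ^ k * Real.exp (-(t / 2 * m ^ 2 + t / 2 * m))

lemma fk_summ {t : ℝ} (ht : 0 < t) {k : ℕ} (hk : k ≤ 2) : Summable (fun m => ‖fk t k m‖) :=
  summ_poly (by linarith) _ _ _ hk

lemma fk_zero (t : ℝ) : ∑' m, fk t 0 m = 0 := by
  have h : ∑' m, fk t 0 m = ∑' m, fk t 0 (-1 - m) := ((Equiv.subLeft (-1 : ℤ)).tsum_eq (fk t 0)).symm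
  have h2 : ∀ m, fk t 0 (-1 - m) = - fk t 0 m := by
    intro m
    rw [fk, fk, sgn_congr (m := -1 - m) (n := 1 + m) (-1 - m) (by ring), sgn_add]
    push_cast; ring_nf
  simp only [h2, tsum_neg] at h
  linarith

lemma fk_one {t : ℝ} (ht : 0 < t) : ∑' m, fk t 1 m = 2 * eulerE (Real.exp (-t)) ^ 3 := by
  have hc := cube0 (s := Real.exp (-(t / 2))) (Real.exp_pos _) (by simpa using ht)
  have e : Real.exp (-(t / 2)) ^ 2 = Real.exp (-t) := by
    rw [← Real.exp_nat_mul]; push_cast; ring_nf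
  rw [e] at hc
  have e2 : ∀ k : ℤ, (k : ℝ) * ((-1) ^ k * Real.exp (-(t / 2)) ^ (k ^ 2 + k)) = (fk t 1 k - fk t 0 k) / 2 := by
    intro k
    rw [fk, fk, rexp_zpow]
    push_cast; ring_nf
  simp only [e2] at hc
  rw [tsum_div_const, ((fk_summ ht (by norm_num)).of_norm).tsum_sub ((fk_summ ht (by norm_num)).of_norm), fk_zero] at hc
  linarith

/-- theta moments -/
noncomputable def gs (c t : ℝ) (k : ℕ) (m : ℤ) : ℝ :=
  (-1 : ℝ) ^ m * (10 * m - c) ^ k * Real.exp (-(t * (10 * m - c) ^ 2 / 40))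

lemma gs_summ (c : ℝ) {t : ℝ} (ht : 0 < t) {k : ℕ} (hk : k ≤ 2) : Summable (fun m => ‖gs c t k m‖) := by
  refine ((summ_poly (x := 5 * t / 2) (by linarith) (- c * t / 2) 10 (-c) hk).mul_right (Real.exp (-(t * c ^ 2 / 40)))).congr fun m => ?_
  rw [← Real.norm_of_nonneg (Real.exp_pos (-(t * c ^ 2 / 40))).le, ← norm_mul, mul_assoc, ← Real.exp_add, gs]
  ring_nf

lemma ram {t : ℝ} (ht : 0 < t) :
    (∑' m, gs 3 t 2 m) * (∑' m, gs 1 t 0 m) - (∑' m, gs 3 t 0 m) * (∑' m, gs 1 t 2 m) =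
      8 * eulerE (Real.exp (-t)) ^ 6 * Real.exp (-(t / 4)) := by
  have f0 := fk_summ ht (k := 0) (by norm_num)
  have f1 := fk_summ ht (k := 1) (by norm_num)
  have f2 := fk_summ ht (k := 2) (by norm_num)
  have h5 : 0 < 5 * t := by linarith
  have r0 := fk_summ h5 (k := 0) (by norm_num)
  have r2 := fk_summ h5 (k := 2) (by norm_num)
  have g0 := gs_summ 3 ht (k := 0) (by norm_num)
  have g2 := gs_summ 3 ht (k := 2) (by norm_num)
  have k0 := gs_summ 1 ht (k := 0) (by norm_num)
  have k2 := gs_summ 1 ht (k := 2) (by norm_num)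
  have s20 := summable_mul_of_summable_norm f2 f0
  have s02 := summable_mul_of_summable_norm f0 f2
  have s11 := summable_mul_of_summable_norm f1 f1
  let F : ℤ × ℤ → ℝ := fun z => 3 * (fk t 2 z.1 * fk t 0 z.2) - 3 * (fk t 0 z.1 * fk t 2 z.2) + 8 * (fk t 1 z.1 * fk t 1 z.2)
  have hF : Summable F := ((s20.mul_left 3).sub (s02.mul_left 3)).add (s11.mul_left 8)
  have hS : ∑' z, F z = 8 * (2 * eulerE (Real.exp (-t)) ^ 3) ^ 2 := by
    rw [((s20.mul_left 3).sub (s02.mul_left 3)).tsum_add (s11.mul_left 8), (s20.mul_left 3).tsum_sub (s02.mul_left 3),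
      tsum_mul_left, tsum_mul_left, tsum_mul_left, ← tsum_mul_tsum_of_summable_norm f2 f0,
      ← tsum_mul_tsum_of_summable_norm f0 f2, ← tsum_mul_tsum_of_summable_norm f1 f1, fk_one ht]
    ring
  have hFe : ∀ m n : ℤ, F (m, n) = (-1) ^ (m + n) * (3 * (2 * m + 1) ^ 2 - 3 * (2 * n + 1) ^ 2 + 8 * (2 * m + 1) * (2 * n + 1)) *
      Real.exp (-(t / 2 * m ^ 2 + t / 2 * m + t / 2 * n ^ 2 + t / 2 * n)) := by
    intro m n
    have : Real.exp (-(t / 2 * m ^ 2 + t / 2 * m + t / 2 * n ^ 2 + t / 2 * n)) =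
      Real.exp (-(t / 2 * m ^ 2 + t / 2 * m)) * Real.exp (-(t / 2 * n ^ 2 + t / 2 * n)) := by
      rw [← Real.exp_add]; ring_nf
    simp only [F, fk]
    rw [this, sgn_add]; ring
  rw [gaussB hF] at hS
  · have c0 : ∑' w : ℤ × ℤ, F (2 * w.1 - w.2, w.1 + 2 * w.2 + 1) = 0 := by
      have : ∀ w : ℤ × ℤ, F (2 * w.1 - w.2, w.1 + 2 * w.2 + 1) =
        (-25 * Real.exp (-t)) * (fk (5 * t) 2 w.1 * fk (5 * t) 0 w.2 - fk (5 * t) 0 w.1 * fk (5 * t) 2 w.2) := by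
        intro w
        rw [hFe, sgn_congr (n := 1 + (w.1 + w.2)) w.1 (by ring), sgn_add, sgn_add]
        have : Real.exp (-(t / 2 * ((2 * w.1 - w.2 : ℤ) : ℝ) ^ 2 + t / 2 * ((2 * w.1 - w.2 : ℤ) : ℝ) +
          t / 2 * ((w.1 + 2 * w.2 + 1 : ℤ) : ℝ) ^ 2 + t / 2 * ((w.1 + 2 * w.2 + 1 : ℤ) : ℝ))) =
          Real.exp (-t) * (Real.exp (-(5 * t / 2 * w.1 ^ 2 + 5 * t / 2 * w.1)) * Real.exp (-(5 * t / 2 * w.2 ^ 2 + 5 * t / 2 * w.2))) := by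
          rw [← Real.exp_add, ← Real.exp_add]; push_cast; ring_nf
        rw [this, fk, fk, fk, fk]; push_cast; ring
      simp only [this]
      rw [tsum_mul_left, (summable_mul_of_summable_norm r2 r0).tsum_sub (summable_mul_of_summable_norm r0 r2),
        ← tsum_mul_tsum_of_summable_norm r2 r0, ← tsum_mul_tsum_of_summable_norm r0 r2]
      ring
    have c1 : ∑' w : ℤ × ℤ, F (2 * w.1 - w.2 - 1, w.1 + 2 * w.2 - 1) = Real.exp (t / 4) *
      ((∑' m, gs 3 t 2 m) * (∑' m, gs 1 t 0 m) - (∑' m, gs 3 t 0 m) * (∑' m, gs 1 t 2 m)) := by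
      rw [tsum_mul_tsum_of_summable_norm g2 k0, tsum_mul_tsum_of_summable_norm g0 k2,
        ← (summable_mul_of_summable_norm g2 k0).tsum_sub (summable_mul_of_summable_norm g0 k2), ← tsum_mul_left]
      congr 1; ext w
      rw [hFe, sgn_congr (n := w.1 + w.2) (w.1 - 1) (by ring), sgn_add]
      have : Real.exp (-(t / 2 * ((2 * w.1 - w.2 - 1 : ℤ) : ℝ) ^ 2 + t / 2 * ((2 * w.1 - w.2 - 1 : ℤ) : ℝ) +
          t / 2 * ((w.1 + 2 * w.2 - 1 : ℤ) : ℝ) ^ 2 + t / 2 * ((w.1 + 2 * w.2 - 1 : ℤ) : ℝ))) =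
          Real.exp (t / 4) * (Real.exp (-(t * (10 * w.1 - 3) ^ 2 / 40)) * Real.exp (-(t * (10 * w.2 - 1) ^ 2 / 40))) := by
          rw [← Real.exp_add, ← Real.exp_add]; push_cast; ring_nf
      rw [this, gs, gs, gs, gs]; push_cast; ring
    rw [c0, c1] at hS
    have he : Real.exp (t / 4) * Real.exp (-(t / 4)) = 1 := by rw [← Real.exp_add]; simp
    linear_combination (Real.exp (-(t / 4)) / 4) * hS - ((∑' m, gs 3 t 2 m) * (∑' m, gs 1 t 0 m) - (∑' m, gs 3 t 0 m) * (∑' m, gs 1 t 2 m)) * he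
  · intro a b
    rw [hFe, hFe, sgn_congr (n := 1 + (a + b)) (-b - 1) (by ring), sgn_add 1]
    have : -(t / 2 * ((-b - 1 : ℤ) : ℝ) ^ 2 + t / 2 * ((-b - 1 : ℤ) : ℝ) + t / 2 * (a : ℝ) ^ 2 + t / 2 * a) =
      -(t / 2 * a ^ 2 + t / 2 * a + t / 2 * b ^ 2 + t / 2 * b) := by push_cast; ring
    rw [this]; push_cast; ring

lemma gs_deriv (c : ℝ) {t : ℝ} (ht : 0 < t) :
    HasDerivAt (fun t => ∑' m, gs c t 0 m) (-(1 / 40) * ∑' m, gs c t 2 m) t := by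
  rw [← tsum_mul_left]
  refine hasDerivAt_tsum_of_isPreconnected (g := fun m t => gs c t 0 m) (g' := fun m t => -(1 / 40) * gs c t 2 m)
    (u := fun m => 1 / 40 * ‖gs c (t / 2) 2 m‖) (t := Set.Ioi (t / 2)) (y₀ := t)
    ((gs_summ c (by linarith) le_rfl).mul_left _) isOpen_Ioi isPreconnected_Ioi ?_ ?_ ?_ ?_ ?_
  · intro m y _
    have h : HasDerivAt (fun y : ℝ => -(y * (10 * (m : ℝ) - c) ^ 2 / 40)) (-(1 * (10 * (m : ℝ) - c) ^ 2 / 40)) y :=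
      (((hasDerivAt_id y).mul_const _).div_const _).neg
    have h2 := (h.exp).const_mul ((-1 : ℝ) ^ m * (10 * m - c) ^ 0)
    refine h2.congr_deriv ?_
    simp only [gs]; ring
  · intro m y hy
    rw [norm_mul, gs, gs, norm_mul, norm_mul ((-1 : ℝ) ^ m * (10 * m - c) ^ 2)]
    rw [show ‖-(1 / 40 : ℝ)‖ = 1 / 40 by norm_num]
    gcongr
    simp only [Real.norm_eq_abs, Real.abs_exp]
    have : t / 2 < y := hy
    gcongr
  · exact Set.mem_Ioi.2 (by linarith)
  · exact (gs_summ c ht (by norm_num)).of_norm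
  · exact Set.mem_Ioi.2 (by linarith)

lemma gs_th (c t : ℝ) : ∑' m, gs c t 0 m = Real.exp (-(t * c ^ 2 / 40)) * th (-1) (5 * t / 2) (- c * t / 2) := by
  rw [th, ← tsum_mul_left]
  congr 1; ext m
  rw [mul_left_comm, ← Real.exp_add, gs]
  ring_nf

lemma g_eq {t : ℝ} (ht : 0 < t) : ∑' m, gs 3 t 0 m = Real.exp (-(t * 9 / 40)) *
    (pp (Real.exp (-t)) 1 5 * pp (Real.exp (-t)) 4 5 * pp (Real.exp (-t)) 5 5) := by
  rw [gs_th, th_neg ht 1 4 (by norm_num) (by push_cast; ring) (by push_cast; ring)]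
  norm_num

lemma h_eq {t : ℝ} (ht : 0 < t) : ∑' m, gs 1 t 0 m = Real.exp (-(t / 40)) *
    (pp (Real.exp (-t)) 2 5 * pp (Real.exp (-t)) 3 5 * pp (Real.exp (-t)) 5 5) := by
  rw [gs_th, th_neg ht 2 3 (by norm_num) (by push_cast; ring) (by push_cast; ring)]
  norm_num

/-- the continued fraction quotient -/
noncomputable def RR (t : ℝ) : ℝ := (∑' m, gs 3 t 0 m) / (∑' m, gs 1 t 0 m)

lemma RR_eq {t : ℝ} (ht : 0 < t) : RR t = Real.exp (-(t / 5)) *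
    (pp (Real.exp (-t)) 1 5 * pp (Real.exp (-t)) 4 5 / (pp (Real.exp (-t)) 2 5 * pp (Real.exp (-t)) 3 5)) := by
  obtain ⟨h0, h1⟩ := ex_q ht
  have p2 := pp_pos h0 h1 (a := 2) (m := 5) (by norm_num) (by norm_num)
  have p3 := pp_pos h0 h1 (a := 3) (m := 5) (by norm_num) (by norm_num)
  have p5 := pp_pos h0 h1 (a := 5) (m := 5) (by norm_num) (by norm_num)
  have e : Real.exp (-(t * 9 / 40)) = Real.exp (-(t / 5)) * Real.exp (-(t / 40)) := by
    rw [← Real.exp_add]; ring_nf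
  rw [RR, g_eq ht, h_eq ht, e]
  field_simp

lemma RR_deriv {t : ℝ} (ht : 0 < t) :
    HasDerivAt RR (-(RR t * (eulerE (Real.exp (-t)) ^ 5 / (5 * eulerE (Real.exp (-t) ^ 5))))) t := by
  obtain ⟨h0, h1⟩ := ex_q ht
  have p1 := pp_pos h0 h1 (a := 1) (m := 5) (by norm_num) (by norm_num)
  have p4 := pp_pos h0 h1 (a := 4) (m := 5) (by norm_num) (by norm_num)
  have p2 := pp_pos h0 h1 (a := 2) (m := 5) (by norm_num) (by norm_num)
  have p3 := pp_pos h0 h1 (a := 3) (m := 5) (by norm_num) (by norm_num)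
  have p5 := pp_pos h0 h1 (a := 5) (m := 5) (by norm_num) (by norm_num)
  have hE : eulerE (Real.exp (-t)) = pp (Real.exp (-t)) 1 5 * pp (Real.exp (-t)) 2 5 * pp (Real.exp (-t)) 3 5 *
      pp (Real.exp (-t)) 4 5 * pp (Real.exp (-t)) 5 5 := by
    rw [eulerE_eq_pp, pp_split5 h0 h1 1 one_pos]
    norm_num
  have hE5 : eulerE (Real.exp (-t) ^ 5) = pp (Real.exp (-t)) 5 5 := eulerE_pow _ _
  have hgh : (∑' m, gs 3 t 0 m) * (∑' m, gs 1 t 0 m) = Real.exp (-(t / 4)) *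
      (eulerE (Real.exp (-t)) * eulerE (Real.exp (-t) ^ 5)) := by
    have e : Real.exp (-(t / 4)) = Real.exp (-(t * 9 / 40)) * Real.exp (-(t / 40)) := by
      rw [← Real.exp_add]; ring_nf
    rw [g_eq ht, h_eq ht, hE, hE5, e]; ring
  have hh : (∑' m, gs 1 t 0 m) ≠ 0 := by rw [h_eq ht]; positivity
  have hE1p := eulerE_pos h0 h1
  have hE5p : 0 < eulerE (Real.exp (-t) ^ 5) := by rw [hE5]; exact p5
  have hd := (gs_deriv 3 ht).div (gs_deriv 1 ht) hh
  refine hd.congr_deriv ?_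
  have hr := ram ht
  rw [RR]
  set g := ∑' m, gs 3 t 0 m
  set h := ∑' m, gs 1 t 0 m
  set g2 := ∑' m, gs 3 t 2 m
  set h2 := ∑' m, gs 1 t 2 m
  set E := eulerE (Real.exp (-t))
  set E5 := eulerE (Real.exp (-t) ^ 5)
  set X := Real.exp (-(t / 4))
  field_simp
  have : g * h * E ^ 5 = X * E ^ 6 * E5 := by rw [hgh]; ring
  linear_combination (-E5 * 5) * hr + 40 * this


/-- parity classes -/
def pEquiv : Fin 2 × (ℤ × ℤ) ≃ ℤ × ℤ where
  toFun p := (p.2.1 + p.2.2 + (p.1 : ℕ), p.2.1 - p.2.2)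
  invFun z := (⟨((z.1 - z.2) % 2).toNat, by omega⟩, (z.2 + (z.1 - z.2) / 2, (z.1 - z.2) / 2))
  left_inv := by
    rintro ⟨⟨j, hj⟩, a, b⟩
    simp only [Prod.mk.injEq, Fin.mk.injEq]
    refine ⟨by omega, by omega, by omega⟩
  right_inv := by
    rintro ⟨x, y⟩
    simp only [Prod.mk.injEq]
    constructor <;> omega

lemma par2 {F : ℤ × ℤ → ℝ} (hF : Summable F) :
    ∑' z, F z = ∑' w : ℤ × ℤ, F (w.1 + w.2, w.1 - w.2) + ∑' w : ℤ × ℤ, F (w.1 + w.2 + 1, w.1 - w.2) := by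
  have h1 : Summable (fun p => F (pEquiv p)) := pEquiv.summable_iff.2 hF
  rw [← pEquiv.tsum_eq F, h1.tsum_prod, tsum_fintype, Fin.sum_univ_two]
  simp [pEquiv]

/-- even part -/
noncomputable def Aq (t α : ℝ) : ℝ := th 1 (10 * t) (2 * α * t)

lemma Aq_even (t α : ℝ) : Aq t (-α) = Aq t α := by
  rw [Aq, Aq, th, th, ← (Equiv.neg ℤ).tsum_eq]
  congr 1; ext n; simp

lemma Aq_shift (t α : ℝ) : Aq t α = Real.exp (-(t * (10 + 2 * α))) * Aq t (α + 10) := by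
  rw [Aq, Aq, th, th, ← (Equiv.addRight (1 : ℤ)).tsum_eq, ← tsum_mul_left]
  congr 1; ext n
  simp only [one_zpow, one_mul, ← Real.exp_add, Equiv.coe_addRight]
  push_cast; ring_nf

lemma Th_mul {t : ℝ} (ht : 0 < t) (α β : ℝ) {y z : ℝ} (hy : y = (α + β) * t) (hz : z = (α - β) * t) :
    th (-1) (5 * t) y * th (-1) (5 * t) z = Aq t α * Aq t β -
      (Real.exp (-(t * (5 / 2 + α))) * Aq t (α + 5)) * (Real.exp (-(t * (5 / 2 + β))) * Aq t (β + 5)) := by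
  subst hy hz
  have h1 : |(-1 : ℝ)| = 1 := by norm_num
  have h1' : |(1 : ℝ)| = 1 := by norm_num
  have h5 : 0 < 5 * t := by linarith
  have h10 : 0 < 10 * t := by linarith
  rw [th_mul h1 h5 h5, par2 (th_mul_summ _ _ h1 h5 h5), sub_eq_add_neg]
  congr 1
  · rw [Aq, Aq, th_mul h1' h10 h10]
    congr 1; ext w
    rw [mul_mul_mul_comm, ← sgn_add, sgn_congr (n := 0) w.1 (by ring), ← Real.exp_add]
    simp only [one_zpow, zpow_zero, one_mul, ← Real.exp_add]
    push_cast; ring_nf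
  · rw [mul_mul_mul_comm, Aq, Aq, th_mul h1' h10 h10, ← neg_mul, ← tsum_mul_left]
    congr 1; ext w
    rw [mul_mul_mul_comm, ← sgn_add, sgn_congr (n := 1) w.1 (by ring), ← Real.exp_add]
    simp only [one_zpow, zpow_one, one_mul, neg_mul, ← Real.exp_add]
    push_cast; ring_nf

lemma th_pair {t : ℝ} (ht : 0 < t) (a b : ℕ) (hab : a + b = 10) {y : ℝ} (hy : y = (a - b) * t / 2) :
    th (-1) (5 * t) y = pp (Real.exp (-t)) a 10 * pp (Real.exp (-t)) b 10 * pp (Real.exp (-t)) 10 10 := by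
  have : (a : ℝ) + b = 10 := by exact_mod_cast hab
  rw [th_neg ht a b (by omega) (by rw [this]; ring) hy, hab]

lemma I1 {t : ℝ} (ht : 0 < t) {q : ℝ} (hq : q = Real.exp (-t)) :
    (pp q 3 10 * pp q 7 10) ^ 2 * (pp q 4 10 * pp q 6 10) ^ 2 -
      q ^ 2 * (pp q 1 10 * pp q 9 10) ^ 2 * (pp q 2 10 * pp q 8 10) ^ 2 =
      pp q 5 10 ^ 4 * (pp q 2 10 * pp q 8 10) * (pp q 4 10 * pp q 6 10) := by
  obtain ⟨h0, h1⟩ := ex_q ht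
  have p10 := pp_pos h0 h1 (a := 10) (m := 10) (by norm_num) (by norm_num)
  have e02 := Th_mul ht 0 2 (y := 2 * t) (z := -2 * t) (by ring) (by ring)
  have e10 := Th_mul ht 1 0 (y := t) (z := t) (by ring) (by ring)
  have e00 := Th_mul ht 0 0 (y := 0) (z := 0) (by ring) (by ring)
  have e12 := Th_mul ht 1 2 (y := 3 * t) (z := - t) (by ring) (by ring)
  have e30 := Th_mul ht 3 0 (y := 3 * t) (z := 3 * t) (by ring) (by ring)
  have e04 := Th_mul ht 0 4 (y := 4 * t) (z := -4 * t) (by ring) (by ring)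
  have a6 := Aq_shift t (-6)
  have a7 := Aq_shift t (-7)
  have a8 := Aq_shift t (-8)
  have a9 := Aq_shift t (-9)
  rw [Aq_even] at a6 a7 a8 a9
  norm_num only at e02 e10 e00 e12 e30 e04 a6 a7 a8 a9
  rw [th_pair ht 7 3 rfl (by push_cast; ring), th_pair ht 3 7 rfl (by push_cast; ring)] at e02
  rw [th_pair ht 6 4 rfl (by push_cast; ring)] at e10
  rw [th_pair ht 5 5 rfl (by push_cast; ring)] at e00
  rw [th_pair ht 8 2 rfl (by push_cast; ring), th_pair ht 4 6 rfl (by push_cast; ring)] at e12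
  rw [th_pair ht 8 2 rfl (by push_cast; ring)] at e30
  rw [th_pair ht 9 1 rfl (by push_cast; ring), th_pair ht 1 9 rfl (by push_cast; ring)] at e04
  rw [a6, a7] at e12
  rw [a7] at e02
  rw [a6] at e10
  rw [a8] at e30
  rw [a9] at e04
  rw [← hq] at e02 e10 e00 e12 e30 e04 p10
  have c1 : Real.exp (-(t * (9 / 2))) * Real.exp (-(t * -4)) = Real.exp (-(t / 2)) := by
    rw [← Real.exp_add]; ring_nf
  have c2 : Real.exp (-(t * (7 / 2))) * Real.exp (-(t * -2)) = Real.exp (-(t / 2)) ^ 3 := by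
    rw [← Real.exp_add, ← Real.exp_nat_mul]; push_cast; ring_nf
  have c3 : Real.exp (-(t * (11 / 2))) * Real.exp (-(t * -6)) * Real.exp (-(t / 2)) = 1 := by
    rw [← Real.exp_add, ← Real.exp_add, ← Real.exp_zero]; ring_nf
  have c4 : Real.exp (-(t * (13 / 2))) * Real.exp (-(t * -8)) * Real.exp (-(t / 2)) ^ 3 = 1 := by
    rw [← Real.exp_add, ← Real.exp_nat_mul, ← Real.exp_add, ← Real.exp_zero]; push_cast; ring_nf
  have hqs : q = Real.exp (-(t / 2)) ^ 2 := by
    rw [hq, ← Real.exp_nat_mul]; push_cast; ring_nf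
  rw [← mul_assoc _ _ (Aq t 3), c1] at e02
  rw [← mul_assoc _ _ (Aq t 4), c2] at e10
  rw [← mul_assoc _ _ (Aq t 3), c1, ← mul_assoc _ _ (Aq t 4), c2] at e12
  rw [← mul_assoc _ _ (Aq t 2)] at e30
  rw [← mul_assoc _ _ (Aq t 1)] at e04
  set s := Real.exp (-(t / 2)) with hs
  set X := Real.exp (-(t * (11 / 2))) * Real.exp (-(t * -6))
  set Y := Real.exp (-(t * (13 / 2))) * Real.exp (-(t * -8))
  set B0 := Real.exp (-(t * (5 / 2))) * Aq t 5
  have hp : pp q 10 10 ^ 4 ≠ 0 := by positivity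
  have e30' : s * ((pp q 8 10 * pp q 2 10) ^ 2 * pp q 10 10 ^ 2) = s * Aq t 3 * Aq t 0 - Aq t 2 * B0 := by
    linear_combination s * e30 - Aq t 2 * B0 * c3
  have e04' : s ^ 3 * ((pp q 9 10 * pp q 1 10) ^ 2 * pp q 10 10 ^ 2) = Aq t 0 * (s ^ 3 * Aq t 4) - B0 * Aq t 1 := by
    linear_combination s ^ 3 * e04 - Aq t 1 * B0 * c4
  have e02' : (pp q 3 10 * pp q 7 10) ^ 2 * pp q 10 10 ^ 2 = Aq t 0 * Aq t 2 - B0 * (s * Aq t 3) := by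
    linear_combination e02
  have e10' : (pp q 4 10 * pp q 6 10) ^ 2 * pp q 10 10 ^ 2 = Aq t 1 * Aq t 0 - (s ^ 3 * Aq t 4) * B0 := by
    linear_combination e10
  have e00' : pp q 5 10 ^ 4 * pp q 10 10 ^ 2 = Aq t 0 * Aq t 0 - B0 * B0 := by
    linear_combination e00
  have e12' : (pp q 2 10 * pp q 8 10) * (pp q 4 10 * pp q 6 10) * pp q 10 10 ^ 2 = Aq t 1 * Aq t 2 - s ^ 3 * Aq t 4 * (s * Aq t 3) := by
    linear_combination e12
  apply mul_right_cancel₀ hp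
  have hq4 : q ^ 2 = s * s ^ 3 := by rw [hqs]; ring
  rw [hq4]
  calc _ = ((pp q 3 10 * pp q 7 10) ^ 2 * pp q 10 10 ^ 2) * ((pp q 4 10 * pp q 6 10) ^ 2 * pp q 10 10 ^ 2) -
        (s * ((pp q 8 10 * pp q 2 10) ^ 2 * pp q 10 10 ^ 2)) * (s ^ 3 * ((pp q 9 10 * pp q 1 10) ^ 2 * pp q 10 10 ^ 2)) := by ring
    _ = (pp q 5 10 ^ 4 * pp q 10 10 ^ 2) * ((pp q 2 10 * pp q 8 10) * (pp q 4 10 * pp q 6 10) * pp q 10 10 ^ 2) := by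
      rw [e30', e04', e02', e10', e00', e12']; ring
    _ = _ := by ring

/-- the level ten function -/
noncomputable def KK (t : ℝ) : ℝ := RR t * RR (2 * t) ^ 2

lemma KK_eq {t : ℝ} (ht : 0 < t) {q : ℝ} (hq : q = Real.exp (-t)) :
    KK t = q * (pp q 1 10 * pp q 9 10) * (pp q 2 10 * pp q 8 10) /
      ((pp q 3 10 * pp q 7 10) * (pp q 4 10 * pp q 6 10)) := by
  obtain ⟨h0, h1⟩ := ex_q ht
  have e2 : Real.exp (-(2 * t)) = Real.exp (-t) ^ 2 := by
    rw [← Real.exp_nat_mul]; push_cast; ring_nf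
  have e3 : Real.exp (-t) = Real.exp (-(t / 5)) * Real.exp (-(2 * t / 5)) ^ 2 := by
    rw [← Real.exp_nat_mul, ← Real.exp_add]; push_cast; ring_nf
  rw [KK, RR_eq ht, RR_eq (by linarith), e2]
  rw [← hq] at *
  have P : ∀ a : ℕ, 0 < a → pp q a 10 ≠ 0 := fun a ha => (pp_pos h0 h1 ha (by norm_num)).ne'
  have p1 := P 1 (by norm_num)
  have p2 := P 2 (by norm_num)
  have p3 := P 3 (by norm_num)
  have p4 := P 4 (by norm_num)
  have p6 := P 6 (by norm_num)
  have p7 := P 7 (by norm_num)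
  have p8 := P 8 (by norm_num)
  have p9 := P 9 (by norm_num)
  rw [pp_split h0 h1 1 (m := 5) (by norm_num), pp_split h0 h1 2 (m := 5) (by norm_num),
      pp_split h0 h1 3 (m := 5) (by norm_num), pp_split h0 h1 4 (m := 5) (by norm_num),
      pp_pow, pp_pow, pp_pow, pp_pow]
  norm_num only
  nth_rewrite 13 [e3]
  field_simp

lemma KK_deriv0 {t : ℝ} (ht : 0 < t) {q : ℝ} (hq : q = Real.exp (-t)) :
    HasDerivAt KK (-(KK t * (eulerE q ^ 5 / (5 * eulerE (q ^ 5)) +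
      4 * (eulerE (q ^ 2) ^ 5 / (5 * eulerE (q ^ 10)))))) t := by
  have e2 : Real.exp (-(2 * t)) = Real.exp (-t) ^ 2 := by
    rw [← Real.exp_nat_mul]; push_cast; ring_nf
  have h2 := RR_deriv (t := 2 * t) (by linarith)
  have h3 : HasDerivAt (fun t => RR (2 * t)) _ t := h2.comp t ((hasDerivAt_id t).const_mul 2)
  have h4 := (RR_deriv ht).mul (h3.pow 2)
  rw [e2, ← pow_mul, ← hq] at h4
  refine h4.congr_deriv ?_
  rw [KK]
  simp only [Pi.pow_apply]
  push_cast
  ring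


lemma E_facts {t : ℝ} (ht : 0 < t) {q : ℝ} (hq : q = Real.exp (-t)) :
    0 < q ∧ 0 < eulerE q ∧ 0 < eulerE (q ^ 2) ∧ 0 < eulerE (q ^ 5) ∧ 0 < eulerE (q ^ 10) := by
  obtain ⟨h0, h1⟩ := ex_q ht
  have hq0 : 0 < q := hq ▸ Real.exp_pos _
  rw [← hq] at h0 h1
  have H : ∀ n : ℕ, n ≠ 0 → 0 < eulerE (q ^ n) := fun n hn => eulerE_pos (by positivity) (pow_lt_one₀ h0 h1 hn)
  exact ⟨hq0, eulerE_pos h0 h1, H _ (by norm_num), H _ (by norm_num), H _ (by norm_num)⟩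

/-- the Hauptmodul -/
noncomputable def uu (q : ℝ) : ℝ := eulerE (q ^ 2) * eulerE (q ^ 5) ^ 5 / (q * eulerE q * eulerE (q ^ 10) ^ 5)

lemma u_pos {t : ℝ} (ht : 0 < t) {q : ℝ} (hq : q = Real.exp (-t)) : 0 < uu q := by
  obtain ⟨h0, h1, h2, h5, h10⟩ := E_facts ht hq
  rw [uu]; positivity

lemma u_sub {t : ℝ} (ht : 0 < t) {q : ℝ} (hq : q = Real.exp (-t)) :
    uu q - 4 = eulerE q ^ 3 * eulerE (q ^ 5) / (q * eulerE (q ^ 2) * eulerE (q ^ 10) ^ 3) := by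
  obtain ⟨h0, h1, h2, h5, h10⟩ := E_facts ht hq
  have h := I3 ht hq
  rw [uu]
  field_simp at h ⊢
  linear_combination h

lemma u_add {t : ℝ} (ht : 0 < t) {q : ℝ} (hq : q = Real.exp (-t)) :
    uu q + 1 = eulerE (q ^ 2) ^ 4 * eulerE (q ^ 5) ^ 2 / (q * eulerE q ^ 2 * eulerE (q ^ 10) ^ 4) := by
  obtain ⟨h0, h1, h2, h5, h10⟩ := E_facts ht hq
  have h := I2 ht hq
  rw [uu]
  field_simp at h ⊢
  linear_combination (-1) * h

lemma W_eq {t : ℝ} (ht : 0 < t) {q : ℝ} (hq : q = Real.exp (-t)) :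
    eulerE q ^ 5 / (5 * eulerE (q ^ 5)) + 4 * (eulerE (q ^ 2) ^ 5 / (5 * eulerE (q ^ 10))) =
      eulerE q * eulerE (q ^ 2) ^ 2 * eulerE (q ^ 5) ^ 3 / eulerE (q ^ 10) ^ 2 := by
  obtain ⟨h0, h1, h2, h5, h10⟩ := E_facts ht hq
  have ha := u_sub ht hq
  have hb := u_add ht hq
  have hu := u_pos ht hq
  have e1 : eulerE q ^ 5 / (5 * eulerE (q ^ 5)) * (5 * uu q) = (uu q - 4) *
      (eulerE q * eulerE (q ^ 2) ^ 2 * eulerE (q ^ 5) ^ 3 / eulerE (q ^ 10) ^ 2) := by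
    rw [ha, uu]; field_simp
  have e2 : eulerE (q ^ 2) ^ 5 / (5 * eulerE (q ^ 10)) * (5 * uu q) = (uu q + 1) *
      (eulerE q * eulerE (q ^ 2) ^ 2 * eulerE (q ^ 5) ^ 3 / eulerE (q ^ 10) ^ 2) := by
    rw [hb, uu]; field_simp
  have h5u : 5 * uu q ≠ 0 := by positivity
  apply mul_right_cancel₀ h5u
  linear_combination e1 + 4 * e2

lemma KK_pos {t : ℝ} (ht : 0 < t) : 0 < KK t := by
  rw [KK_eq ht rfl]
  obtain ⟨h0, h1⟩ := ex_q ht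
  have P : ∀ a : ℕ, 0 < a → 0 < pp (Real.exp (-t)) a 10 := fun a ha => pp_pos h0 h1 ha (by norm_num)
  have p1 := P 1 (by norm_num)
  have p2 := P 2 (by norm_num)
  have p3 := P 3 (by norm_num)
  have p4 := P 4 (by norm_num)
  have p6 := P 6 (by norm_num)
  have p7 := P 7 (by norm_num)
  have p8 := P 8 (by norm_num)
  have p9 := P 9 (by norm_num)
  positivity

lemma KK_u {t : ℝ} (ht : 0 < t) {q : ℝ} (hq : q = Real.exp (-t)) : 1 - KK t ^ 2 = KK t * uu q := by
  have h := I1 ht hq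
  obtain ⟨h0, h1⟩ := ex_q ht
  have hq0 : 0 < q := hq ▸ Real.exp_pos _
  rw [KK_eq ht hq, uu]
  rw [← hq] at h0 h1
  have P : ∀ a : ℕ, 0 < a → 0 < pp q a 10 := fun a ha => pp_pos h0 h1 ha (by norm_num)
  have p1 := P 1 (by norm_num)
  have p2 := P 2 (by norm_num)
  have p3 := P 3 (by norm_num)
  have p4 := P 4 (by norm_num)
  have p5 := P 5 (by norm_num)
  have p6 := P 6 (by norm_num)
  have p7 := P 7 (by norm_num)
  have p8 := P 8 (by norm_num)
  have p9 := P 9 (by norm_num)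
  have p10 := P 10 (by norm_num)
  rw [E1_eq h0 h1, E2_eq h0 h1, E5_eq h0 h1, E10_eq]
  generalize pp q 1 10 = p1 at *
  generalize pp q 2 10 = p2 at *
  generalize pp q 3 10 = p3 at *
  generalize pp q 4 10 = p4 at *
  generalize pp q 5 10 = p5 at *
  generalize pp q 6 10 = p6 at *
  generalize pp q 7 10 = p7 at *
  generalize pp q 8 10 = p8 at *
  generalize pp q 9 10 = p9 at *
  generalize pp q 10 10 = p10 at *
  field_simp
  linear_combination h

/-- the antiderivative -/
noncomputable def FF (k : ℝ) : ℝ := 2 - (2 + k) / (1 + k - k ^ 2)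

/-- `k` as a function of `q` -/
noncomputable def kq (q : ℝ) : ℝ := if 0 < q then KK (-Real.log q) else 0

lemma FF_deriv {q : ℝ} (h0 : 0 < q) (h1 : q < 1) :
    HasDerivAt (fun q => FF (kq q)) (eulerE q ^ 8 * eulerE (q ^ 10) ^ 3 / eulerE (q ^ 2) ^ 7) q := by
  have ht : 0 < -Real.log q := by have := Real.log_neg h0 h1; linarith
  have hq : q = Real.exp (-(-Real.log q)) := by rw [neg_neg, Real.exp_log h0]
  have hK := KK_deriv0 ht hq
  rw [W_eq ht hq] at hK
  have hk : HasDerivAt kq (KK (-Real.log q) * (eulerE q * eulerE (q ^ 2) ^ 2 * eulerE (q ^ 5) ^ 3 / eulerE (q ^ 10) ^ 2) / q) q := by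
    have h := hK.comp q (Real.hasDerivAt_log h0.ne').neg
    have h' : HasDerivAt (fun q => KK (-Real.log q)) (KK (-Real.log q) * (eulerE q * eulerE (q ^ 2) ^ 2 * eulerE (q ^ 5) ^ 3 / eulerE (q ^ 10) ^ 2) / q) q := by
      refine h.congr_deriv ?_
      ring
    refine h'.congr_of_eventuallyEq ?_
    filter_upwards [lt_mem_nhds h0] with x hx
    simp [kq, hx]
  have hkq : kq q = KK (-Real.log q) := by simp [kq, h0]
  have hku := KK_u ht hq
  have hkp := KK_pos ht
  rw [← hkq] at hku hkp hk
  have hup := u_pos ht hq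
  have hD : 1 + kq q - kq q ^ 2 = kq q * (uu q + 1) := by linear_combination hku
  have hD0 : 1 + kq q - kq q ^ 2 ≠ 0 := by rw [hD]; positivity
  have hF : HasDerivAt FF ((1 - 4 * kq q - kq q ^ 2) / (1 + kq q - kq q ^ 2) ^ 2) (kq q) := by
    have a1 : HasDerivAt (fun k : ℝ => 2 + k) 1 (kq q) := (hasDerivAt_id _).const_add 2
    have a2 : HasDerivAt (fun k : ℝ => 1 + k - k ^ 2) (1 - 2 * kq q) (kq q) := by
      have := ((hasDerivAt_id (kq q)).const_add 1).sub (hasDerivAt_pow 2 (kq q))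
      refine this.congr_deriv ?_
      norm_num
    have a3 := (a1.div a2 hD0).const_sub 2
    refine a3.congr_deriv ?_
    rw [← neg_div]; congr 1; ring
  have hN : 1 - 4 * kq q - kq q ^ 2 = kq q * (uu q - 4) := by linear_combination hku
  refine (hF.comp q hk).congr_deriv ?_
  rw [hN, hD, u_sub ht hq, u_add ht hq]
  obtain ⟨_, h1, h2, h5, h10⟩ := E_facts ht hq
  field_simp

lemma eulerE_anti {p p' : ℝ} (h0 : 0 ≤ p) (h : p ≤ p') (h1 : p' < 1) : eulerE p' ≤ eulerE p := by
  refine le_of_tendsto_of_tendsto' (poch_tendsto (h0.trans h) h1) (poch_tendsto h0 (h.trans_lt h1)) fun n => ?_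
  refine Finset.prod_le_prod (fun j _ => ?_) (fun j _ => ?_)
  · have : p' ^ (j + 1) < 1 := pow_lt_one₀ (h0.trans h) h1 (by omega)
    linarith
  · gcongr

lemma eulerE_le_one {p : ℝ} (h0 : 0 ≤ p) (h1 : p < 1) : eulerE p ≤ 1 := by
  simpa [poch] using eulerE_le_poch h0 h1 0

lemma kq_bound {q : ℝ} (h0 : 0 < q) (h1 : q ≤ 1 / 2) : 0 ≤ kq q ∧ kq q ≤ q / eulerE (1 / 2) ^ 6 := by
  have ht : 0 < -Real.log q := by have := Real.log_neg h0 (by linarith); linarith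
  have hq : q = Real.exp (-(-Real.log q)) := by rw [neg_neg, Real.exp_log h0]
  have hkq : kq q = KK (-Real.log q) := by simp [kq, h0]
  have hku := KK_u ht hq
  have hkp := KK_pos ht
  rw [← hkq] at hku hkp
  obtain ⟨_, p1, p2, p5, p10⟩ := E_facts ht hq
  refine ⟨hkp.le, ?_⟩
  have hc : 0 < eulerE (1 / 2) := eulerE_pos (by norm_num) (by norm_num)
  have l2 : eulerE (1 / 2) ≤ eulerE (q ^ 2) := eulerE_anti (by positivity) (by nlinarith) (by norm_num)
  have l5 : eulerE (1 / 2) ≤ eulerE (q ^ 5) := eulerE_anti (by positivity)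
    ((pow_le_of_le_one h0.le (by linarith) (by norm_num)).trans h1) (by norm_num)
  have m1 : eulerE q ≤ 1 := eulerE_le_one h0.le (by linarith)
  have m10 : eulerE (q ^ 10) ≤ 1 := eulerE_le_one (by positivity) (pow_lt_one₀ h0.le (by linarith) (by norm_num))
  have hu : eulerE (1 / 2) ^ 6 / q ≤ uu q := by
    rw [uu]
    calc eulerE (1 / 2) ^ 6 / q = eulerE (1 / 2) * eulerE (1 / 2) ^ 5 / (q * 1 * 1 ^ 5) := by
          rw [one_pow, mul_one, mul_one]; ring
      _ ≤ _ := by gcongr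
  have h3 : kq q * (eulerE (1 / 2) ^ 6 / q) ≤ 1 := by
    have := mul_le_mul_of_nonneg_left hu hkp.le
    nlinarith [sq_nonneg (kq q)]
  rw [le_div_iff₀ (by positivity)]
  rw [← mul_div_assoc, div_le_one h0] at h3
  exact h3

lemma int_eq {b : ℝ} (h0 : 0 < b) (h1 : b < 1) :
    (∫ q in (0:ℝ)..b, eulerE q ^ 8 * eulerE (q ^ 10) ^ 3 / eulerE (q ^ 2) ^ 7) = FF (kq b) := by
  have hc : ContinuousOn (fun q => FF (kq q)) (Set.Icc 0 b) := by
    intro x hx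
    rcases hx.1.eq_or_lt with h | h
    · subst h
      have k0 : kq 0 = 0 := by simp [kq]
      have hk : ContinuousWithinAt kq (Set.Icc 0 b) 0 := by
        rw [ContinuousWithinAt, k0]
        have hz : Tendsto (fun q : ℝ => q / eulerE (1 / 2) ^ 6) (𝓝[Set.Icc 0 b] 0) (𝓝 0) := by
          have : Continuous (fun q : ℝ => q / eulerE (1 / 2) ^ 6) := by fun_prop
          have := this.tendsto 0
          simp only [zero_div] at this
          exact this.mono_left nhdsWithin_le_nhds
        have hev : ∀ᶠ q in 𝓝[Set.Icc 0 b] (0:ℝ), 0 ≤ kq q ∧ kq q ≤ q / eulerE (1 / 2) ^ 6 := by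
          have h2 : ∀ᶠ q in 𝓝[Set.Icc 0 b] (0:ℝ), q < 1 / 2 :=
            nhdsWithin_le_nhds (gt_mem_nhds (by norm_num))
          filter_upwards [h2, self_mem_nhdsWithin] with q hq hq2
          rcases hq2.1.eq_or_lt with h | h
          · rw [← h, k0]; simp
          · exact kq_bound h hq.le
        exact tendsto_of_tendsto_of_tendsto_of_le_of_le' tendsto_const_nhds hz (hev.mono fun _ h => h.1) (hev.mono fun _ h => h.2)
      have hF : ContinuousAt FF (kq 0) := by
        rw [k0]
        unfold FF
        refine ContinuousAt.sub (by fun_prop) (ContinuousAt.div (by fun_prop) (by fun_prop) (by norm_num))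
      exact hF.comp_continuousWithinAt hk
    · exact (FF_deriv h (hx.2.trans_lt h1)).continuousAt.continuousWithinAt
  have hd : ∀ x ∈ Set.Ioo 0 b, HasDerivAt (fun q => FF (kq q)) (eulerE x ^ 8 * eulerE (x ^ 10) ^ 3 / eulerE (x ^ 2) ^ 7) x :=
    fun x hx => FF_deriv hx.1 (hx.2.trans h1)
  have hi : IntervalIntegrable (fun q => eulerE q ^ 8 * eulerE (q ^ 10) ^ 3 / eulerE (q ^ 2) ^ 7) MeasureTheory.volume 0 b := by
    refine intervalIntegral.intervalIntegrable_deriv_of_nonneg (g := fun q => FF (kq q)) ?_ ?_ ?_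
    · rwa [Set.uIcc_of_le h0.le]
    · rwa [min_eq_left h0.le, max_eq_right h0.le]
    · rw [min_eq_left h0.le, max_eq_right h0.le]
      intro x hx
      have hx1 := hx.2.trans h1
      have a := eulerE_pos hx.1.le hx1
      have b := eulerE_pos (p := x ^ 10) (pow_nonneg hx.1.le _) (pow_lt_one₀ hx.1.le hx1 (by norm_num))
      have c := eulerE_pos (p := x ^ 2) (pow_nonneg hx.1.le _) (pow_lt_one₀ hx.1.le hx1 (by norm_num))
      positivity
  rw [intervalIntegral.integral_eq_sub_of_hasDerivAt_of_le h0.le hc hd hi]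
  simp [FF, kq]


lemma th_modular {a : ℝ} (ha : 0 < a) :
    th (-1) (π * a) 0 = 1 / a ^ (1 / 2 : ℝ) * (Real.exp (-(π / (4 * a))) * th 1 (π / a) (π / a)) := by
  have h := Complex.tsum_exp_neg_quadratic (a := (a : ℂ)) (by simpa using ha) (-Complex.I / 2)
  have e1 : ∀ n : ℤ, Complex.exp (-π * a * n ^ 2 + 2 * π * (-Complex.I / 2) * n) =
      (((-1 : ℝ) ^ n * Real.exp (-(π * a * n ^ 2 + 0 * n)) : ℝ) : ℂ) := by
    intro n
    have h1 : Complex.exp (-(π * Complex.I)) = -1 := by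
      rw [Complex.exp_neg, Complex.exp_pi_mul_I]; norm_num
    push_cast
    rw [← h1, ← Complex.exp_int_mul, ← Complex.exp_add]
    ring_nf
  have e2 : ∀ n : ℤ, Complex.exp (-π / a * (n + Complex.I * (-Complex.I / 2)) ^ 2) =
      ((Real.exp (-(π / (4 * a))) * ((1 : ℝ) ^ n * Real.exp (-(π / a * n ^ 2 + π / a * n))) : ℝ) : ℂ) := by
    intro n
    have h2 : Complex.I * (-Complex.I / 2) = 1 / 2 := by
      linear_combination (-1 / 2) * Complex.I_mul_I
    rw [one_zpow, one_mul, ← Real.exp_add, h2]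
    push_cast
    congr 1
    field_simp
    ring
  have e3 : 1 / (a : ℂ) ^ (1 / 2 : ℂ) = ((1 / a ^ (1 / 2 : ℝ) : ℝ) : ℂ) := by
    push_cast [Complex.ofReal_cpow ha.le]
    norm_num
  simp only [e1, e2] at h
  rw [e3, ← Complex.ofReal_tsum, ← Complex.ofReal_tsum, tsum_mul_left, ← Complex.ofReal_mul, Complex.ofReal_inj] at h
  exact h

lemma th_modular_sq {a : ℝ} (ha : 0 < a) :
    th (-1) (π * a) 0 ^ 2 = 1 / a * (Real.exp (-(π / (2 * a))) * th 1 (π / a) (π / a) ^ 2) := by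
  have h1 : (a ^ (1 / 2 : ℝ)) ^ 2 = a := by
    rw [← Real.rpow_natCast, ← Real.rpow_mul ha.le]; norm_num
  have h2 : Real.exp (-(π / (4 * a))) ^ 2 = Real.exp (-(π / (2 * a))) := by
    rw [← Real.exp_nat_mul]; congr 1; push_cast; field_simp; ring
  rw [th_modular ha, mul_pow, mul_pow, h2, div_pow, one_pow, h1]

lemma u_val {q : ℝ} (hq : q = Real.exp (-(2 * π / √10))) : uu q = 4 + 2 * √5 := by
  have hs : 0 < √10 := by positivity
  have hs2 : √10 * √10 = 10 := Real.mul_self_sqrt (by norm_num)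
  have hpi := Real.pi_pos
  have ht : 0 < 2 * π / √10 := by positivity
  have m1 := th_modular_sq (a := 2 / √10) (by positivity)
  have m2 := th_modular_sq (a := √10) (by positivity)
  set t := 2 * π / √10 with htd
  have x1 : π * (2 / √10) = t := by rw [htd]; ring
  have x2 : π / (2 / √10) = 5 * t / 2 := by rw [htd]; field_simp; nlinarith
  have x3 : π / (2 * (2 / √10)) = 5 * t / 4 := by rw [htd]; field_simp; nlinarith
  have y1 : π * √10 = 5 * t := by rw [htd]; field_simp; nlinarith
  have y2 : π / √10 = t / 2 := by rw [htd]; ring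
  have y3 : π / (2 * √10) = t / 4 := by rw [htd]; field_simp; ring
  rw [x1, x2, x3, phi1 ht, psi5 ht, ← hq] at m1
  rw [y1, y2, y3, phi5 ht, psi1 ht, ← hq] at m2
  have hup := u_pos ht hq
  have hs1 := u_sub ht hq
  have ha1 := u_add ht hq
  obtain ⟨h0, p1, p2, p5, p10⟩ := E_facts ht hq
  have ex : Real.exp (-(5 * t / 4)) = q * Real.exp (-(t / 4)) := by
    rw [hq, ← Real.exp_add]; ring_nf
  rw [ex] at m1
  have hX := Real.exp_pos (-(t / 4))
  set X := Real.exp (-(t / 4))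
  have r1 : (uu q - 4) * (eulerE (q ^ 5) ^ 2 / eulerE (q ^ 10)) ^ 2 = uu q * (eulerE q ^ 2 / eulerE (q ^ 2)) ^ 2 := by
    rw [hs1, uu]; field_simp
  have r2 : (uu q + 1) * (q * (2 * eulerE (q ^ 10) ^ 2 / eulerE (q ^ 5)) ^ 2) = (2 * eulerE (q ^ 2) ^ 2 / eulerE q) ^ 2 := by
    rw [ha1]; field_simp
  have hquad : (uu q - 4) * (uu q + 1) = 5 * uu q := by
    rw [m1, m2, ← r2] at r1
    have hP : 0 < X * q * (2 * eulerE (q ^ 10) ^ 2 / eulerE (q ^ 5)) ^ 2 / √10 := by positivity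
    apply mul_right_cancel₀ hP.ne'
    have s1 : 1 / (2 / √10) = 5 * (1 / √10) := by field_simp; nlinarith
    rw [s1] at r1
    linear_combination r1
  have h5 : √5 * √5 = 5 := Real.mul_self_sqrt (by norm_num)
  have h50 : 2 < √5 := by rw [Real.lt_sqrt] <;> norm_num
  have hf : (uu q - (4 + 2 * √5)) * (uu q - 4 + 2 * √5) = 0 := by linear_combination hquad - 4 * h5
  rcases mul_eq_zero.1 hf with h | h
  · linarith
  · linarith

theorem stmt_6 :
    (∫ q in (0:ℝ)..Real.exp (-2 * Real.pi / Real.sqrt 10),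
        eulerE q ^ 8 * eulerE (q ^ 10) ^ 3 / eulerE (q ^ 2) ^ 7)
      = 1 - 2 * Real.sqrt ((10 - 4 * Real.sqrt 5) / 5) := by
  have ht : 0 < 2 * π / √10 := by have := Real.pi_pos; positivity
  have e : -2 * Real.pi / Real.sqrt 10 = -(2 * π / √10) := by ring
  rw [e]
  obtain ⟨_, h1⟩ := ex_q ht
  rw [int_eq (Real.exp_pos _) h1]
  have hu := u_val (q := Real.exp (-(2 * π / √10))) rfl
  have hku := KK_u ht rfl
  have hkp := KK_pos ht
  have hk : kq (Real.exp (-(2 * π / √10))) = KK (2 * π / √10) := by simp [kq, Real.exp_pos]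
  rw [hk]
  rw [hu] at hku
  set k := KK (2 * π / √10)
  have h5 : √5 * √5 = 5 := Real.mul_self_sqrt (by norm_num)
  have h50 : 0 < √5 := by positivity
  have hD : 1 + k - k ^ 2 = k * (5 + 2 * √5) := by linear_combination hku
  have hR : √((10 - 4 * √5) / 5) = (4 + 2 * √5 + 2 * k) / (2 * (5 + 2 * √5)) := by
    rw [Real.sqrt_eq_iff_mul_self_eq_of_pos (by positivity)]
    field_simp
    ring_nf
    nlinarith
  rw [hR, FF, hD]
  field_simp
  nlinarith
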